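/- arXiv:2407.02780 — 8 statements merged into one kernel-verified Lean document; each statement's English description precedes it below -/
import Mathlib

section
/- Let X be a primitive strongly regular graph with parameters (v,k,λ,μ) and non-principal eigenvalues θ1 > 0 > θ2, and let f be a θ2-eigenfunction of X whose support has cardinality exactly −2θ2. Then the support of f can be partitioned into two sets T0 and T1, each of cardinality −θ2, such that every vertex of T0 is adjacent to every vertex of T1, no two vertices of T0 are adjacent, no two vertices of T1 are adjacent, and there exists a nonzero real number c with f(x) = c for all x ∈ T0 and f(x) = −c for all x ∈ T1. -/
/-!
The argument is a weight count. Write `m = -θ₂ > 0`. Summing the eigenvalue equation over all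
vertices of the `k`-regular graph gives `θ₂ ∑ f = k ∑ f`, and `θ₂ < 0 ≤ k` forces `∑ f = 0`.

Let `M` be the maximum of `|f|`, let `|f γ| = M`, and give each vertex `x` the sign `-1` if it is
adjacent to `γ` and `+1` otherwise. By `∑ f = 0` and the eigenvalue equation at `γ`, the signed sum
of `f` is `-2 θ₂ f γ`, of absolute value `2 m M`. At most `2 m` of its terms are nonzero and each
has absolute value at most `M`, so the nonzero ones all equal `f γ`: on the support, `f = -f γ` at the
neighbours of `γ` and `f = f γ` elsewhere (`eq_or_neg_of_maximal`). Hence `|f| = M` on the whole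
support, every support vertex may play the role of `γ`, and the level sets of `f γ` and `-f γ` are
the two parts; they have equal size since `∑ f = 0`.
-/

theorem sum_eq_zero_of_regular {V : Type*} [Fintype V] (G : SimpleGraph V) [DecidableRel G.Adj]
    {k : ℕ} (hreg : G.IsRegularOfDegree k) {θ : ℝ} (hθ : θ < 0) (f : V → ℝ)
    (hf : ∀ γ : V, θ * f γ = ∑ δ ∈ G.neighborFinset γ, f δ) : ∑ x, f x = 0 := by
  have h1 : θ * ∑ x, f x = k * ∑ x, f x := by
    rw [Finset.mul_sum, Finset.mul_sum, Finset.sum_congr rfl fun γ _ => hf γ]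
    rw [Finset.sum_comm' (t' := Finset.univ) (s' := fun y => G.neighborFinset y)
      (by intro x y; simp [G.adj_comm])]
    refine Finset.sum_congr rfl fun y _ => ?_
    rw [Finset.sum_const, nsmul_eq_mul, G.card_neighborFinset_eq_degree, hreg y]
  have h2 : (θ - k) * ∑ x, f x = 0 := by linarith
  rcases mul_eq_zero.mp h2 with h | h
  · have : (0 : ℝ) ≤ k := k.cast_nonneg
    linarith
  · exact h

/-- The equality case of the weight count: `γ` is a vertex where `|f|` is maximal, and the support
has size at most `-2θ`. -/
theorem eq_or_neg_of_maximal {V : Type*} [Fintype V] (G : SimpleGraph V) [DecidableRel G.Adj]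
    {θ : ℝ} (f : V → ℝ) (hsum : ∑ x, f x = 0)
    (hf : ∀ γ : V, θ * f γ = ∑ δ ∈ G.neighborFinset γ, f δ)
    (hsupp : ((Finset.univ.filter fun x => f x ≠ 0).card : ℝ) ≤ -2 * θ)
    (γ : V) (hγ : ∀ x, |f x| ≤ |f γ|) (x : V) (hx : f x ≠ 0) :
    f x = if G.Adj γ x then -f γ else f γ := by
  have hγ0 : f γ ≠ 0 := by
    intro h
    have := hγ x
    rw [h, abs_zero] at this
    exact hx (abs_nonpos_iff.mp this)
  -- The signed values, multiplied by `f γ` so that the sign of `f γ` does not matter.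
  set g : V → ℝ := fun y => (if G.Adj γ y then -f y else f y) * f γ with hg
  set b : V → ℝ := fun y => if f y ≠ 0 then f γ ^ 2 else 0 with hb
  have hle : ∀ y ∈ Finset.univ, g y ≤ b y := by
    intro y _
    have h1 := hγ y
    have h2 : |f y| * |f γ| ≤ f γ ^ 2 := by
      rw [← sq_abs (f γ), sq]
      exact mul_le_mul_of_nonneg_right h1 (abs_nonneg _)
    have h3 := le_abs_self (f y * f γ)
    have h4 := neg_abs_le (f y * f γ)
    rw [abs_mul] at h3 h4
    simp only [hg, hb]
    by_cases hy : f y = 0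
    · simp [hy]
    · rw [if_pos hy]
      split_ifs <;> linarith
  have hgsum : ∑ y, g y = -2 * θ * f γ ^ 2 := by
    have : ∀ y, g y = f y * f γ - 2 * f γ * (if G.Adj γ y then f y else 0) := by
      intro y
      simp only [hg]
      split_ifs <;> ring
    simp only [this, Finset.sum_sub_distrib, ← Finset.sum_mul, ← Finset.mul_sum, hsum]
    rw [← Finset.sum_filter, ← G.neighborFinset_eq_filter, ← hf γ]
    ring
  have hbsum : ∑ y, b y ≤ -2 * θ * f γ ^ 2 := by
    simp only [hb]
    rw [← Finset.sum_filter, Finset.sum_const, nsmul_eq_mul]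
    exact mul_le_mul_of_nonneg_right hsupp (sq_nonneg _)
  have heq : g x = b x :=
    (Finset.sum_eq_sum_iff_of_le hle).mp
      (le_antisymm (Finset.sum_le_sum hle) (hbsum.trans hgsum.ge)) x (Finset.mem_univ x)
  simp only [hg, hb, if_pos hx, sq] at heq
  have := mul_right_cancel₀ hγ0 heq
  split_ifs at this ⊢ <;> linarith

/-- If `f` is a `θ₂`-eigenfunction of a primitive strongly regular graph whose
support has cardinality exactly `-2θ₂`, then the support splits into two sets `T0`, `T1` of
cardinality `-θ₂` inducing a complete bipartite graph, on which `f` is constant `c` and `-c`. -/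
theorem stmt0 {V : Type*} [Fintype V] (G : SimpleGraph V) [DecidableRel G.Adj]
    (v k l μ : ℕ) (hsrg : G.IsSRGWith v k l μ)
    (hprim : G.Connected ∧ Gᶜ.Connected)
    (θ₁ θ₂ : ℝ)
    (hθ₁root : θ₁ ^ 2 - ((l : ℝ) - (μ : ℝ)) * θ₁ - ((k : ℝ) - (μ : ℝ)) = 0)
    (hθ₂root : θ₂ ^ 2 - ((l : ℝ) - (μ : ℝ)) * θ₂ - ((k : ℝ) - (μ : ℝ)) = 0)
    (hθ₁pos : θ₁ > 0) (hθ₂neg : θ₂ < 0)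
    (f : V → ℝ) (hf0 : f ≠ 0)
    (hf : ∀ γ : V, θ₂ * f γ = ∑ δ ∈ G.neighborFinset γ, f δ)
    (hsupp : ({x | f x ≠ 0}.ncard : ℝ) = -2 * θ₂) :
    ∃ T₀ T₁ : Set V,
      Disjoint T₀ T₁ ∧ T₀ ∪ T₁ = {x | f x ≠ 0} ∧
      (T₀.ncard : ℝ) = -θ₂ ∧ (T₁.ncard : ℝ) = -θ₂ ∧
      (∀ x ∈ T₀, ∀ y ∈ T₁, G.Adj x y) ∧
      (∀ x ∈ T₀, ∀ y ∈ T₀, ¬G.Adj x y) ∧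
      (∀ x ∈ T₁, ∀ y ∈ T₁, ¬G.Adj x y) ∧
      ∃ c : ℝ, c ≠ 0 ∧ (∀ x ∈ T₀, f x = c) ∧ (∀ x ∈ T₁, f x = -c) := by
  classical
  have hsum := sum_eq_zero_of_regular G hsrg.regular hθ₂neg f hf
  have hcard : ((Finset.univ.filter fun x => f x ≠ 0).card : ℝ) = -2 * θ₂ := by
    rw [← hsupp, ← Set.ncard_coe_finset]
    simp
  obtain ⟨z, hz⟩ := Function.ne_iff.mp hf0
  have : Nonempty V := ⟨z⟩
  obtain ⟨γ, hγ⟩ := Finite.exists_max fun x => |f x|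
  have hc : f γ ≠ 0 := by
    intro h
    have := hγ z
    rw [h, abs_zero] at this
    exact hz (abs_nonpos_iff.mp this)
  have key := eq_or_neg_of_maximal G f hsum hf hcard.le
  have hval : ∀ x, f x ≠ 0 → f x = f γ ∨ f x = -f γ := by
    intro x hx
    have := key γ hγ x hx
    split_ifs at this
    · exact Or.inr this
    · exact Or.inl this
  have hmax : ∀ x, f x ≠ 0 → ∀ y, |f y| ≤ |f x| := by
    intro x hx y
    have : |f x| = |f γ| := by
      rcases hval x hx with h | h <;> simp [h]
    rw [this]
    exact hγ y
  have hunion : {x | f x = f γ} ∪ {x | f x = -f γ} = {x | f x ≠ 0} := by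
    ext x
    simp only [Set.mem_union, Set.mem_ofPred_eq]
    constructor
    · rintro (h | h) <;> simpa [h] using hc
    · exact hval x
  have hne : f γ ≠ -f γ := fun h => hc (by linarith)
  have hdisj : Disjoint {x | f x = f γ} {x | f x = -f γ} := by
    rw [Set.disjoint_left]
    intro x h1 h2
    exact hne (h1.symm.trans h2)
  have hadd : (({x | f x = f γ}.ncard : ℝ)) + ({x | f x = -f γ}.ncard : ℝ) = -2 * θ₂ := by
    rw [← hsupp, ← hunion, Set.ncard_union_eq hdisj]
    push_cast
    rfl
  have hsub : (({x | f x = f γ}.ncard : ℝ)) = ({x | f x = -f γ}.ncard : ℝ) := by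
    have h1 : ∀ x, f x = (if f x = f γ then f γ else 0) - (if f x = -f γ then f γ else 0) := by
      intro x
      by_cases hx : f x = 0
      · rw [hx, if_neg (Ne.symm hc), if_neg (fun h => hc (by linarith))]
        ring
      · rcases hval x hx with h | h
        · rw [h, if_pos rfl, if_neg hne]
          ring
        · rw [h, if_neg hne.symm, if_pos rfl]
          ring
    have h2 := hsum
    rw [Finset.sum_congr rfl fun x _ => h1 x, Finset.sum_sub_distrib, ← Finset.sum_filter,
      ← Finset.sum_filter, Finset.sum_const, Finset.sum_const, nsmul_eq_mul, nsmul_eq_mul,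
      ← sub_mul] at h2
    have h3 := (mul_eq_zero.mp h2).resolve_right hc
    rw [← Set.ncard_coe_finset, ← Set.ncard_coe_finset] at h3
    simp only [Finset.coe_filter, Finset.mem_univ, true_and] at h3
    linarith
  -- Two support vertices are adjacent exactly when their values differ.
  have hadj : ∀ x y, f x ≠ 0 → f y ≠ 0 → (G.Adj x y ↔ f y ≠ f x) := by
    intro x y hx hy
    have := key x (hmax x hx) y hy
    split_ifs at this with h
    · refine ⟨fun _ h' => hx (by linarith), fun _ => h⟩
    · exact ⟨fun h' => absurd h' h, fun h' => absurd this h'⟩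
  refine ⟨{x | f x = f γ}, {x | f x = -f γ}, hdisj, hunion, by linarith, by linarith, ?_, ?_, ?_,
    f γ, hc, fun x hx => hx, fun x hx => hx⟩
  · intro x hx y hy
    rw [Set.mem_ofPred_eq] at hx hy
    rw [hadj x y (by simpa [hx] using hc) (by simpa [hy] using hc), hx, hy]
    exact hne.symm
  · intro x hx y hy
    rw [Set.mem_ofPred_eq] at hx hy
    rw [hadj x y (by simpa [hx] using hc) (by simpa [hy] using hc), hx, hy]
    exact fun h => h rfl
  · intro x hx y hy
    rw [Set.mem_ofPred_eq] at hx hy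
    rw [hadj x y (by simpa [hx] using hc) (by simpa [hy] using hc), hx, hy]
    exact fun h => h rfl
end

section
/- Let X be a primitive strongly regular graph with parameters (v,k,λ,μ) and non-principal eigenvalues θ1 > 0 > θ2, and let f be a θ1-eigenfunction of X whose support has cardinality exactly 2(θ1+1). Then the support of f can be partitioned into two sets T0 and T1, each of cardinality θ1+1, such that T0 and T1 are cliques of X, no vertex of T0 is adjacent to any vertex of T1, and there exists a nonzero real number c with f(x) = c for all x ∈ T0 and f(x) = −c for all x ∈ T1. -/
/-!
The values of `f` sum to zero, because `θ₁` differs from the valency `k`; this is the only place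
where strong regularity and primitivity are used (`sum_eq_zero`). Let `c` be the maximum of `|f|`,
attained at `x`, with `f x = c > 0` after possibly replacing `f` by `-f`, and let `P` be the sum of
the positive values of `f`. The eigenvalue equation at `x` gives `θ₁ c ≤ P - c`, so `P ≥ (θ₁ + 1) c`.
As no value exceeds `c` in absolute value and the negative values sum to `-P`, there are at least
`θ₁ + 1` positive and at least `θ₁ + 1` negative vertices. Since the support has only `2 (θ₁ + 1)`
elements, equality holds everywhere: `f` takes only the values `c`, `-c` on its support, and
equality in the eigenvalue equation at a support vertex says that it is adjacent to all other
vertices of the same sign and to none of the opposite sign.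
-/

open Finset in
/-- The eigenvalue of an eigenfunction with nonzero sum is the valency `k`; as a root of the
quadratic it then forces `k (k - l - 1) = -μ (k + 1)`, hence `μ = 0`, so that adjacency is
transitive, `G` is complete, and its complement is not connected. -/
theorem sum_eq_zero {V : Type*} [Fintype V] (G : SimpleGraph V) [DecidableRel G.Adj]
    (v k l μ : ℕ) (hsrg : G.IsSRGWith v k l μ)
    (hprim : G.Connected ∧ Gᶜ.Connected) (θ : ℝ)
    (hroot : θ ^ 2 - ((l : ℝ) - (μ : ℝ)) * θ - ((k : ℝ) - (μ : ℝ)) = 0)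
    (hpos : θ > 0) (f : V → ℝ)
    (hf : ∀ γ : V, θ * f γ = ∑ δ ∈ G.neighborFinset γ, f δ) :
    ∑ x, f x = 0 := by
  classical
  have h1 : θ * ∑ x, f x = k * ∑ x, f x := by
    have : ∀ γ, ∑ δ ∈ G.neighborFinset γ, f δ = ∑ δ, if G.Adj γ δ then f δ else 0 := by
      intro γ
      rw [← Finset.sum_filter]
      congr 1
      ext; simp
    rw [Finset.mul_sum, Finset.sum_congr rfl (fun x _ => (hf x).trans (this x)),
      Finset.sum_comm, Finset.mul_sum]
    refine Finset.sum_congr rfl fun y _ => ?_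
    rw [← Finset.sum_filter, Finset.sum_const, nsmul_eq_mul]
    congr 2
    rw [← hsrg.regular.degree_eq y, ← G.card_neighborFinset_eq_degree]
    congr 1
    ext z; simp [G.adj_comm]
  by_contra hne
  have hk : θ = k := mul_right_cancel₀ hne h1
  subst hk
  have hk0 : 0 < k := by exact_mod_cast hpos
  obtain ⟨a⟩ := hprim.1.nonempty
  have hdeg := hsrg.regular.degree_eq a
  obtain ⟨b, hab⟩ := (G.degree_pos_iff_exists_adj a).1 (by omega)
  have hl : l + 1 ≤ k := by
    have h := hab.card_commonNeighbors_lt_degree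
    have h' := hsrg.of_adj a b hab
    rw [hdeg] at h
    rw [← h']
    exact h
  have hμ : μ = 0 := by
    have hl' : (l : ℝ) + 1 ≤ k := by exact_mod_cast hl
    have hμ0 : (0 : ℝ) ≤ μ := by positivity
    have : (μ : ℝ) = 0 := by nlinarith [mul_nonneg hpos.le (sub_nonneg.2 hl'), mul_nonneg hpos.le hμ0]
    exact_mod_cast this
  have htrans : ∀ x y z, G.Adj x y → G.Adj y z → x ≠ z → G.Adj x z := by
    intro x y z hxy hyz hxz
    by_contra hn
    have h := hsrg.of_not_adj hxz hn
    rw [hμ, Fintype.card_eq_zero_iff] at h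
    exact h.false ⟨y, by simp [SimpleGraph.mem_commonNeighbors, hxy, hyz.symm]⟩
  have hcomplete : ∀ x y, G.Reachable x y → x = y ∨ G.Adj x y := by
    rintro x y ⟨p⟩
    induction p with
    | nil => exact Or.inl rfl
    | @cons u w z h p ih =>
      by_cases huz : u = z
      · exact Or.inl huz
      · rcases ih with rfl | ih
        · exact Or.inr h
        · exact Or.inr (htrans _ _ _ h ih huz)
  have : Nontrivial V := ⟨a, b, hab.ne⟩
  obtain ⟨w, hw⟩ := hprim.2.preconnected.exists_adj_of_nontrivial a
  rw [SimpleGraph.compl_adj] at hw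
  rcases hcomplete a w (hprim.1.preconnected a w) with h | h
  · exact hw.1 h
  · exact hw.2 h

open Finset in
/-- At a vertex `x` with `0 < f x`, the eigenvalue equation bounds `(θ + 1) f x` by the sum `P` of
the positive values of `f`; if equality holds, then `x` is adjacent to every other positive vertex
and to no negative one. -/
theorem pos_bound {V : Type*} [Fintype V] (G : SimpleGraph V) [DecidableRel G.Adj]
    (θ : ℝ) (f : V → ℝ) (x : V) (hx : 0 < f x)
    (hf : θ * f x = ∑ δ ∈ G.neighborFinset x, f δ) :
    (θ + 1) * f x ≤ ∑ y with 0 < f y, f y ∧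
    ((θ + 1) * f x = ∑ y with 0 < f y, f y →
      (∀ y, 0 < f y → x ≠ y → G.Adj x y) ∧ ∀ y, f y < 0 → ¬ G.Adj x y) := by
  classical
  -- `t y ≥ 0` is the loss at `y` when the neighbour sum is replaced by the sum over `f > 0`, `y ≠ x`
  let t : V → ℝ := fun y =>
    (if 0 < f y then f y else 0) - (if x = y then f y else 0) - (if G.Adj x y then f y else 0)
  have hsum : ∑ y, t y = ∑ y with 0 < f y, f y - (θ + 1) * f x := by
    have h3 : ∑ y, (if G.Adj x y then f y else 0) = θ * f x := by
      rw [hf, ← Finset.sum_filter]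
      congr 1
      ext; simp
    simp only [t, Finset.sum_sub_distrib, h3]
    rw [Finset.sum_filter]
    simp
    ring
  have ht : ∀ y ∈ (univ : Finset V), 0 ≤ t y := by
    intro y _
    simp only [t]
    by_cases hxy : x = y
    · subst hxy; simp [hx]
    · simp only [hxy, if_false]
      split_ifs <;> linarith
  refine ⟨by linarith [Finset.sum_nonneg ht], fun heq => ?_⟩
  have h0 := (Finset.sum_eq_zero_iff_of_nonneg ht).1 (by rw [hsum, heq, sub_self])
  refine ⟨fun y hy hxy => ?_, fun y hy hadj => ?_⟩
  · by_contra hn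
    have := h0 y (mem_univ _)
    simp only [t, hy, hxy, hn, if_true, if_false] at this
    linarith
  · have := h0 y (mem_univ _)
    simp only [t, hy.not_gt, hadj.ne, hadj, if_true, if_false] at this
    linarith

open Finset in
/-- The conclusion under the normalisation that the maximum of `|f|` is attained at a vertex `x`
with `f x > 0`. -/
theorem split_of_max {V : Type*} [Fintype V] (G : SimpleGraph V) [DecidableRel G.Adj]
    (θ : ℝ) (f : V → ℝ) (hf : ∀ γ : V, θ * f γ = ∑ δ ∈ G.neighborFinset γ, f δ)
    (hsum : ∑ x, f x = 0) (x : V) (hx : 0 < f x) (hmax : ∀ y, |f y| ≤ f x)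
    (hsupp : ({x | f x ≠ 0}.ncard : ℝ) = 2 * (θ + 1)) :
    ∃ T₀ T₁ : Set V,
      Disjoint T₀ T₁ ∧ T₀ ∪ T₁ = {x | f x ≠ 0} ∧
      (T₀.ncard : ℝ) = θ + 1 ∧ (T₁.ncard : ℝ) = θ + 1 ∧
      G.IsClique T₀ ∧ G.IsClique T₁ ∧
      (∀ x ∈ T₀, ∀ y ∈ T₁, ¬G.Adj x y) ∧
      ∃ c : ℝ, c ≠ 0 ∧ (∀ x ∈ T₀, f x = c) ∧ (∀ x ∈ T₁, f x = -c) := by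
  classical
  set c := f x with hc
  set P : Finset V := univ.filter (fun y => 0 < f y) with hP
  set N : Finset V := univ.filter (fun y => f y < 0) with hN
  have hdisj : Disjoint P N := by
    rw [Finset.disjoint_left]
    intro y h1 h2
    simp only [hP, hN, mem_filter, mem_univ, true_and] at h1 h2
    linarith
  have hunion : ((P ∪ N : Finset V) : Set V) = {x | f x ≠ 0} := by
    ext y
    simp only [hP, hN, coe_union, coe_filter, mem_univ, true_and, Set.mem_union, Set.mem_ofPred_eq]
    exact lt_or_lt_iff_ne.trans ne_comm
  have hcard : (P.card : ℝ) + N.card = 2 * (θ + 1) := by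
    rw [← hsupp, ← hunion, Set.ncard_coe_finset, card_union_of_disjoint hdisj]
    push_cast; rfl
  have hPN : ∑ y ∈ P, f y = ∑ y ∈ N, -f y := by
    have h0 : ∑ y ∈ P ∪ N, f y = 0 := by
      rw [← hsum]
      refine Finset.sum_subset (subset_univ _) fun y _ hy => ?_
      by_contra hne
      apply hy
      have : y ∈ ((P ∪ N : Finset V) : Set V) := by rw [hunion]; exact hne
      exact_mod_cast this
    rw [sum_union hdisj] at h0
    rw [sum_neg_distrib]
    linarith
  have hPle : ∀ y ∈ P, f y ≤ c := fun y _ => (le_abs_self _).trans (hmax y)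
  have hNle : ∀ y ∈ N, -f y ≤ c := fun y _ => (neg_le_abs _).trans (hmax y)
  have hPs : ∑ y ∈ P, f y ≤ P.card * c := by
    simpa using Finset.sum_le_sum hPle
  have hNs : ∑ y ∈ N, -f y ≤ N.card * c := by
    simpa using Finset.sum_le_sum hNle
  have hb : (θ + 1) * c ≤ ∑ y ∈ P, f y := (pos_bound G θ f x hx (hf x)).1
  have hPc' : θ + 1 ≤ P.card := le_of_mul_le_mul_right (hb.trans hPs) hx
  have hNc' : θ + 1 ≤ N.card := le_of_mul_le_mul_right ((hPN ▸ hb).trans hNs) hx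
  have hPc : (P.card : ℝ) = θ + 1 := by linarith
  have hNc : (N.card : ℝ) = θ + 1 := by linarith
  rw [hPc] at hPs
  rw [hNc] at hNs
  have hPeq : ∑ y ∈ P, f y = (θ + 1) * c := le_antisymm hPs hb
  have hNeq : ∑ y ∈ N, -f y = (θ + 1) * c := hPN ▸ hPeq
  have hPval : ∀ y ∈ P, f y = c :=
    (Finset.sum_eq_sum_iff_of_le hPle).1 (by simp [hPeq, hPc])
  have hNval : ∀ y ∈ N, -f y = c :=
    (Finset.sum_eq_sum_iff_of_le hNle).1 (by rw [hNeq]; simp [hNc])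
  have hP_adj : ∀ y ∈ P, (∀ z, 0 < f z → y ≠ z → G.Adj y z) ∧ ∀ z, f z < 0 → ¬ G.Adj y z := by
    intro y hy
    have hv := hPval y hy
    exact (pos_bound G θ f y (by rw [hv]; exact hx) (hf y)).2 (by rw [hv]; exact hPeq.symm)
  have hN_adj : ∀ y ∈ N, ∀ z, f z < 0 → y ≠ z → G.Adj y z := by
    intro y hy
    have hv := hNval y hy
    have h := ((pos_bound G θ (fun z => -f z) y (by simp only [hv]; exact hx)
      (by simp only [sum_neg_distrib, mul_neg, hf y])).2
      (by simp only [hv, Left.neg_pos_iff]; exact hNeq.symm)).1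
    intro z hz
    exact h z (by linarith)
  refine ⟨P, N, by exact_mod_cast hdisj, by rw [← hunion, coe_union], by simpa using hPc,
    by simpa using hNc, ?_, ?_, ?_, c, hx.ne', ?_, ?_⟩
  · intro y hy z hz hne
    exact (hP_adj y (by exact_mod_cast hy)).1 z (by simpa [hP] using hz) hne
  · intro y hy z hz hne
    exact hN_adj y (by exact_mod_cast hy) z (by simpa [hN] using hz) hne
  · intro y hy z hz
    exact (hP_adj y (by exact_mod_cast hy)).2 z (by simpa [hN] using hz)
  · intro y hy
    exact hPval y (by exact_mod_cast hy)
  · intro y hy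
    linarith [hNval y (by exact_mod_cast hy)]


/-- If `f` is a `θ₁`-eigenfunction of a primitive strongly regular graph whose
support has cardinality exactly `2(θ₁+1)`, then the support splits into two isolated cliques
`T0`, `T1` of cardinality `θ₁+1`, on which `f` is constant `c` and `-c`. -/
theorem stmt1 {V : Type*} [Fintype V] (G : SimpleGraph V) [DecidableRel G.Adj]
    (v k l μ : ℕ) (hsrg : G.IsSRGWith v k l μ)
    (hprim : G.Connected ∧ Gᶜ.Connected)
    (θ₁ θ₂ : ℝ)
    (hθ₁root : θ₁ ^ 2 - ((l : ℝ) - (μ : ℝ)) * θ₁ - ((k : ℝ) - (μ : ℝ)) = 0)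
    (hθ₂root : θ₂ ^ 2 - ((l : ℝ) - (μ : ℝ)) * θ₂ - ((k : ℝ) - (μ : ℝ)) = 0)
    (hθ₁pos : θ₁ > 0) (hθ₂neg : θ₂ < 0)
    (f : V → ℝ) (hf0 : f ≠ 0)
    (hf : ∀ γ : V, θ₁ * f γ = ∑ δ ∈ G.neighborFinset γ, f δ)
    (hsupp : ({x | f x ≠ 0}.ncard : ℝ) = 2 * (θ₁ + 1)) :
    ∃ T₀ T₁ : Set V,
      Disjoint T₀ T₁ ∧ T₀ ∪ T₁ = {x | f x ≠ 0} ∧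
      (T₀.ncard : ℝ) = θ₁ + 1 ∧ (T₁.ncard : ℝ) = θ₁ + 1 ∧
      G.IsClique T₀ ∧ G.IsClique T₁ ∧
      (∀ x ∈ T₀, ∀ y ∈ T₁, ¬G.Adj x y) ∧
      ∃ c : ℝ, c ≠ 0 ∧ (∀ x ∈ T₀, f x = c) ∧ (∀ x ∈ T₁, f x = -c) := by
  have hsum := sum_eq_zero G v k l μ hsrg hprim θ₁ hθ₁root hθ₁pos f hf
  have := hprim.1.nonempty
  obtain ⟨x, hmax⟩ := Finite.exists_max (fun y => |f y|)
  obtain ⟨z, hz⟩ := Function.ne_iff.1 hf0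
  have hx0 : f x ≠ 0 := abs_pos.1 ((abs_pos.2 hz).trans_le (hmax z))
  rcases lt_or_gt_of_ne hx0 with hx | hx
  · obtain ⟨T₀, T₁, h1, h2, h3, h4, h5, h6, h7, c, hc, h8, h9⟩ :=
      split_of_max G θ₁ (fun y => -f y)
        (by intro γ; simp only [Finset.sum_neg_distrib, mul_neg, hf γ])
        (by simp [hsum]) x (by simpa using hx)
        (by intro y; simpa [abs_of_neg hx] using hmax y) (by simpa using hsupp)
    exact ⟨T₀, T₁, h1, by simpa using h2, h3, h4, h5, h6, h7, -c, neg_ne_zero.2 hc,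
      fun y hy => by linarith [h8 y hy], fun y hy => by linarith [h9 y hy]⟩
  · exact split_of_max G θ₁ f hf hsum x hx
      (by intro y; simpa [abs_of_pos hx] using hmax y) hsupp
end

section
/- Let M and N be distinct n-dimensional totally isotropic subspaces of V with L := M ∩ N of dimension n−1. Then the function f on the vertices of Sp(2n,q) taking value 1 on the one-dimensional subspaces contained in M but not in L, value −1 on the one-dimensional subspaces contained in N but not in L, and value 0 on all other vertices, is a (q^{n−1}−1)-eigenfunction of Sp(2n,q); moreover, each of these two value-sets is a clique of size q^{n−1} and no vertex of one is adjacent to a vertex of the other. -/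
/-!
Write `L = M ∩ N`, a hyperplane of both `M` and `N`, and let `γ = ⟨v⟩` be a vertex.

* If `L` is a hyperplane of `M` and `m ∈ M \ L`, then `l ↦ ⟨m + l⟩` is a bijection from `L` onto the
  points of `M` off `L`, so there are `q ^ dim L` of them (`ncard_points_diff`).
* `M` and `N` are their own orthogonal complements (`mem_of_orthogonal`). A point of `N` off `L` is
  orthogonal to `L`; if it were also orthogonal to a point of `M` off `L`, it would be orthogonal
  to `M`, hence lie in `M` (`form_ne_zero`). So the two cliques are isolated from each other, which
  gives the eigenvalue equation at the vertices of either clique.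
* If `γ ≤ L`, then `γ` is adjacent to all points of both cliques, and the contributions cancel.
* If `γ` lies in neither `M` nor `N`, its orthogonal hyperplane contains neither of them. The number
  of points of `M` off `L` orthogonal to `γ` is then `0` or `q ^ (n - 2)`, according to whether
  `γ` is orthogonal to `L` (`ncard_points_diff_ker`). The same holds for `N`, and the contributions
  cancel again.
-/

open Module

/-- The symplectic polar graph: vertices are the one-dimensional subspaces of `V`,
two distinct vertices being adjacent iff the form vanishes between them
(for an alternating form `B`, `B x y = 0 ↔ B y x = 0`, so symmetrizing is harmless). -/
def symplecticPolarGraph {F V : Type*} [Field F] [AddCommGroup V] [Module F V]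
    (B : V →ₗ[F] V →ₗ[F] F) :
    SimpleGraph {W : Submodule F V // finrank F W = 1} :=
  SimpleGraph.fromRel (fun W₁ W₂ => ∀ x ∈ W₁.1, ∀ y ∈ W₂.1, B x y = 0)

instance {F V : Type*} [Field F] [AddCommGroup V] [Module F V] [Finite V] :
    Finite (Submodule F V) :=
  Finite.of_injective _ SetLike.coe_injective

lemma exists_gen {F V : Type*} [Field F] [AddCommGroup V] [Module F V]
    (W : Submodule F V) (hW : finrank F W = 1) : ∃ v : V, v ≠ 0 ∧ W = F ∙ v := by
  obtain ⟨⟨v, hv⟩, hv0, h⟩ := finrank_eq_one_iff'.1 hW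
  refine ⟨v, fun h0 => hv0 (by simpa using h0), le_antisymm (fun w hw => ?_) ?_⟩
  · obtain ⟨c, hc⟩ := h ⟨w, hw⟩
    exact Submodule.mem_span_singleton.2 ⟨c, congrArg Subtype.val hc⟩
  · exact (Submodule.span_singleton_le_iff_mem _ _).2 hv

/-- A vector outside a hyperplane `L` of `M` spans `M` modulo `L`. -/
lemma exists_smul_add {F V : Type*} [Field F] [AddCommGroup V] [Module F V] [Finite V]
    {L M : Submodule F V} (hLM : L ≤ M) (hd : finrank F M = finrank F L + 1)
    {v : V} (hvM : v ∈ M) (hvL : v ∉ L) {w : V} (hw : w ∈ M) :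
    ∃ c : F, ∃ l ∈ L, w = c • v + l := by
  have hsup : L ⊔ F ∙ v = M := by
    have hle : L ⊔ F ∙ v ≤ M :=
      sup_le hLM ((Submodule.span_singleton_le_iff_mem _ _).2 hvM)
    refine Submodule.eq_of_le_of_finrank_le hle ?_
    have hlt : L < L ⊔ F ∙ v := by
      refine lt_of_le_of_ne le_sup_left fun h => hvL ?_
      rw [h]
      exact Submodule.mem_sup_right (Submodule.mem_span_singleton_self v)
    have := Submodule.finrank_lt_finrank_of_lt hlt
    omega
  rw [← hsup] at hw
  obtain ⟨l, hl, y, hy, rfl⟩ := Submodule.mem_sup.1 hw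
  obtain ⟨c, rfl⟩ := Submodule.mem_span_singleton.1 hy
  exact ⟨c, l, hl, add_comm _ _⟩

/-- If `L` is a hyperplane of `M` and `v ∈ M \ L`, then `l ↦ ⟨v + l⟩` is a bijection from `L`
onto the one-dimensional subspaces of `M` not contained in `L`. -/
lemma ncard_points_diff {F V : Type*} [Field F] [Fintype F] [AddCommGroup V] [Module F V]
    [Finite V] {L M : Submodule F V} (hLM : L ≤ M) (hd : finrank F M = finrank F L + 1) :
    {W : {W : Submodule F V // finrank F W = 1} | W.1 ≤ M ∧ ¬ W.1 ≤ L}.ncard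
      = Fintype.card F ^ finrank F L := by
  have hne : ∃ v ∈ M, v ∉ L := by
    by_contra! h
    have := Submodule.finrank_mono (R := F) (show M ≤ L from h)
    omega
  obtain ⟨v, hvM, hvL⟩ := hne
  have hnz : ∀ l : L, v + (l : V) ≠ 0 := fun l h => hvL (by
    rw [eq_neg_of_add_eq_zero_left h]; exact L.neg_mem l.2)
  let g : L → {W : Submodule F V // finrank F W = 1} :=
    fun l => ⟨F ∙ (v + (l : V)), finrank_span_singleton (hnz l)⟩
  have hinj : Function.Injective g := by
    intro l l' h
    have h1 : (F ∙ (v + (l : V))) = F ∙ (v + (l' : V)) := congrArg Subtype.val h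
    have h2 : v + (l : V) ∈ F ∙ (v + (l' : V)) := h1 ▸ Submodule.mem_span_singleton_self _
    obtain ⟨c, hc⟩ := Submodule.mem_span_singleton.1 h2
    have h3 : (c - 1) • v ∈ L := by
      have : (c - 1) • v = (l : V) - c • (l' : V) := by
        rw [sub_smul, one_smul, sub_eq_sub_iff_add_eq_add, ← smul_add, hc, add_comm]
      rw [this]
      exact L.sub_mem l.2 (L.smul_mem _ l'.2)
    have h4 : c = 1 := by
      by_contra hc1
      exact hvL ((L.smul_mem_iff (sub_ne_zero.2 hc1)).1 h3)
    subst h4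
    rw [one_smul] at hc
    exact Subtype.ext (add_left_cancel hc).symm
  have himg : {W : {W : Submodule F V // finrank F W = 1} | W.1 ≤ M ∧ ¬ W.1 ≤ L}
      = Set.range g := by
    ext ⟨W, hW⟩
    simp only [Set.mem_ofPred_eq, Set.mem_range]
    constructor
    · rintro ⟨hWM, hWL⟩
      obtain ⟨w, hw0, rfl⟩ := exists_gen W hW
      rw [Submodule.span_singleton_le_iff_mem] at hWM hWL
      obtain ⟨c, l, hl, rfl⟩ := exists_smul_add hLM hd hvM hvL hWM
      have hc : c ≠ 0 := by
        rintro rfl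
        exact hWL (by simpa using hl)
      refine ⟨⟨c⁻¹ • l, L.smul_mem _ hl⟩, Subtype.ext ?_⟩
      have : v + c⁻¹ • l = c⁻¹ • (c • v + l) := by
        rw [smul_add, smul_smul, inv_mul_cancel₀ hc, one_smul]
      change (F ∙ (v + c⁻¹ • l)) = _
      rw [this]
      exact Submodule.span_singleton_smul_eq (IsUnit.mk0 _ (inv_ne_zero hc)) _
    · rintro ⟨l, hl⟩
      obtain rfl : (F ∙ (v + (l : V))) = W := congrArg Subtype.val hl
      rw [Submodule.span_singleton_le_iff_mem, Submodule.span_singleton_le_iff_mem]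
      exact ⟨M.add_mem hvM (hLM l.2), fun h => hvL ((L.add_mem_iff_left l.2).1 h)⟩
  rw [himg, ← Set.image_univ, Set.ncard_image_of_injective _ hinj, Set.ncard_univ,
    Module.natCard_eq_pow_finrank (K := F), Nat.card_eq_fintype_card]

lemma isRefl_of_alt {F V : Type*} [Field F] [AddCommGroup V] [Module F V]
    {B : V →ₗ[F] V →ₗ[F] F} (halt : ∀ x : V, B x x = 0) {x y : V} (h : B x y = 0) :
    B y x = 0 :=
  (LinearMap.IsAlt.isRefl (B := B) halt) x y h

lemma adj_iff {F V : Type*} [Field F] [AddCommGroup V] [Module F V]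
    {B : V →ₗ[F] V →ₗ[F] F} (halt : ∀ x : V, B x x = 0)
    (γ δ : {W : Submodule F V // finrank F W = 1}) (v : V) (hγ : γ.1 = F ∙ v) :
    (symplecticPolarGraph B).Adj γ δ ↔ γ ≠ δ ∧ δ.1 ≤ LinearMap.ker (B v) := by
  rw [symplecticPolarGraph, SimpleGraph.fromRel_adj]
  refine and_congr_right fun _ => ⟨?_, fun h => Or.inl fun x hx y hy => ?_⟩
  · have hv : v ∈ γ.1 := hγ ▸ Submodule.mem_span_singleton_self v
    rintro (h | h) y hy
    · exact h v hv y hy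
    · exact isRefl_of_alt halt (h y hy v hv)
  · rw [hγ] at hx
    obtain ⟨c, rfl⟩ := Submodule.mem_span_singleton.1 hx
    have : B v y = 0 := h hy
    simp [this]

/-- A totally isotropic subspace of half the dimension is its own orthogonal complement. -/
lemma mem_of_orthogonal {F V : Type*} [Field F] [AddCommGroup V] [Module F V] [Finite V]
    {n : ℕ} (hV : finrank F V = 2 * n)
    {B : V →ₗ[F] V →ₗ[F] F} (halt : ∀ x : V, B x x = 0)
    (hnd : ∀ x : V, (∀ y : V, B x y = 0) → x = 0)
    {M : Submodule F V} (hMiso : ∀ x ∈ M, ∀ y ∈ M, B x y = 0) (hMdim : finrank F M = n)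
    {v : V} (hv : M ≤ LinearMap.ker (B v)) : v ∈ M := by
  have hr : LinearMap.BilinForm.IsRefl B := LinearMap.IsAlt.isRefl (B := B) halt
  have hN : LinearMap.BilinForm.Nondegenerate B :=
    ⟨hnd, fun y hy => hnd y fun x => hr x y (hy x)⟩
  have h1 := LinearMap.BilinForm.finrank_orthogonal hN M
  have h2 : M ≤ LinearMap.BilinForm.orthogonal B M := fun x hx y hy => hMiso y hy x hx
  have h3 : M = LinearMap.BilinForm.orthogonal B M :=
    Submodule.eq_of_le_of_finrank_eq h2 (by omega)
  rw [h3]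
  exact fun y hy => hr v y (hv hy)

/-- Intersecting with the kernel of a functional not vanishing on `U` lowers the dimension
by one. -/
lemma finrank_inf_ker {F V : Type*} [Field F] [AddCommGroup V] [Module F V] [Finite V]
    (φ : V →ₗ[F] F) (U : Submodule F V) (h : ¬ U ≤ LinearMap.ker φ) :
    finrank F U = finrank F ↥(U ⊓ LinearMap.ker φ) + 1 := by
  have h1 := LinearMap.finrank_range_add_finrank_ker (φ.domRestrict U)
  have h2 : LinearMap.range (φ.domRestrict U) = ⊤ := by
    apply LinearMap.range_eq_top.2
    apply LinearMap.surjective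
    intro h0
    exact h fun x hx => LinearMap.congr_fun h0 ⟨x, hx⟩
  have h3 : finrank F (LinearMap.ker (φ.domRestrict U))
      = finrank F ↥(U ⊓ LinearMap.ker φ) := by
    rw [LinearMap.ker_domRestrict]
    rw [← Submodule.map_comap_subtype]
    exact (LinearEquiv.finrank_eq
      (Submodule.equivMapOfInjective U.subtype U.injective_subtype _))
  rw [h2, finrank_top, finrank_self, h3] at h1
  omega

/-- The number of points of `M \ L` in the hyperplane `ker φ` depends only on whether the
hyperplane contains `L`, provided it does not contain `M`. -/
lemma ncard_points_diff_ker {F V : Type*} [Field F] [Fintype F] [AddCommGroup V] [Module F V]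
    [Finite V] {L M : Submodule F V} (hLM : L ≤ M) (hd : finrank F M = finrank F L + 1)
    (φ : V →ₗ[F] F) (hM : ¬ M ≤ LinearMap.ker φ) [Decidable (L ≤ LinearMap.ker φ)] :
    {W : {W : Submodule F V // finrank F W = 1} |
        W.1 ≤ LinearMap.ker φ ∧ W.1 ≤ M ∧ ¬ W.1 ≤ L}.ncard
      = if L ≤ LinearMap.ker φ then 0 else Fintype.card F ^ (finrank F L - 1) := by
  have hMk := finrank_inf_ker φ M hM
  split_ifs with hL
  · have : M ⊓ LinearMap.ker φ = L :=
      (Submodule.eq_of_le_of_finrank_eq (le_inf hLM hL) (by omega)).symm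
    rw [Set.ncard_eq_zero]
    ext W
    simp only [Set.mem_ofPred_eq, Set.mem_empty_iff_false, iff_false]
    rintro ⟨h1, h2, h3⟩
    exact h3 (this ▸ le_inf h2 h1)
  · have hLk := finrank_inf_ker φ L hL
    have := ncard_points_diff (F := F) (L := L ⊓ LinearMap.ker φ) (M := M ⊓ LinearMap.ker φ)
      (inf_le_inf_right _ hLM) (by omega)
    rw [hLk, Nat.add_sub_cancel, ← this]
    congr 1
    ext W
    simp only [Set.mem_ofPred_eq, le_inf_iff]
    tauto

lemma finsum_mem_eq_ncard_sub {α : Type*} [Finite α] (S T₀ T₁ : Set α) (hT : Disjoint T₀ T₁)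
    (f : α → ℝ) (hf₀ : ∀ W ∈ T₀, f W = 1) (hf₁ : ∀ W ∈ T₁, f W = -1)
    (hfz : ∀ W ∉ T₀ ∪ T₁, f W = 0) :
    ∑ᶠ δ ∈ S, f δ = ((S ∩ T₀).ncard : ℝ) - (S ∩ T₁).ncard := by
  classical
  have := Fintype.ofFinite α
  have hf : ∀ x, f x = (if x ∈ T₀ then 1 else 0) - (if x ∈ T₁ then 1 else 0) := by
    intro x
    by_cases h0 : x ∈ T₀
    · have h1 : x ∉ T₁ := Set.disjoint_left.1 hT h0
      simp [h0, h1, hf₀ x h0]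
    · by_cases h1 : x ∈ T₁
      · simp [h0, h1, hf₁ x h1]
      · simp [h0, h1, hfz x (by simp [h0, h1])]
  rw [finsum_mem_eq_toFinset_sum, Finset.sum_congr rfl fun x _ => hf x,
    Finset.sum_sub_distrib, Finset.sum_boole, Finset.sum_boole,
    Set.ncard_eq_toFinset_card', Set.ncard_eq_toFinset_card']
  congr 3 <;> ext x <;> simp

/-- In a self-orthogonal `M` with hyperplane `L`, no vector of `M \ L` is orthogonal to a vector
of `N \ M`, where `N` is totally isotropic and contains `L`. -/
lemma form_ne_zero {F V : Type*} [Field F] [AddCommGroup V] [Module F V] [Finite V]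
    {B : V →ₗ[F] V →ₗ[F] F} (halt : ∀ x : V, B x x = 0) {L M N : Submodule F V}
    (hLM : L ≤ M) (hLN : L ≤ N) (hd : finrank F M = finrank F L + 1)
    (hM : ∀ w, M ≤ LinearMap.ker (B w) → w ∈ M) (hNiso : ∀ x ∈ N, ∀ y ∈ N, B x y = 0)
    {v w : V} (hvM : v ∈ M) (hvL : v ∉ L) (hwN : w ∈ N) (hwM : w ∉ M) : B v w ≠ 0 := by
  intro h
  refine hwM (hM w fun x hx => ?_)
  obtain ⟨c, l, hl, rfl⟩ := exists_smul_add hLM hd hvM hvL hx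
  simp [isRefl_of_alt halt h, hNiso w hwN l (hLN hl)]

/-- for distinct `n`-dimensional totally isotropic subspaces `M, N` with
`L := M ⊓ N` of dimension `n-1`, the `±1` function on the one-dimensional subspaces of
`M \ L` and `N \ L` is a `(q^(n-1) - 1)`-eigenfunction of `Sp(2n, q)`, and the two
value-sets are isolated cliques of size `q^(n-1)`. -/
theorem stmt2 {F V : Type*} [Field F] [Fintype F] [AddCommGroup V] [Module F V] [Finite V]
    (q n : ℕ) (hq : Fintype.card F = q) (hn : 2 ≤ n) (hV : finrank F V = 2 * n)
    (B : V →ₗ[F] V →ₗ[F] F)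
    (halt : ∀ x : V, B x x = 0)
    (hnd : ∀ x : V, (∀ y : V, B x y = 0) → x = 0)
    (M N : Submodule F V) (hMN : M ≠ N)
    (hMiso : ∀ x ∈ M, ∀ y ∈ M, B x y = 0) (hNiso : ∀ x ∈ N, ∀ y ∈ N, B x y = 0)
    (hMdim : finrank F M = n) (hNdim : finrank F N = n)
    (hLdim : finrank F ↥(M ⊓ N) = n - 1)
    (T₀ T₁ : Set {W : Submodule F V // finrank F W = 1})
    (hT₀ : T₀ = {W | W.1 ≤ M ∧ ¬W.1 ≤ M ⊓ N})
    (hT₁ : T₁ = {W | W.1 ≤ N ∧ ¬W.1 ≤ M ⊓ N})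
    (f : {W : Submodule F V // finrank F W = 1} → ℝ)
    (hf₀ : ∀ W ∈ T₀, f W = 1) (hf₁ : ∀ W ∈ T₁, f W = -1)
    (hfz : ∀ W ∉ T₀ ∪ T₁, f W = 0) :
    f ≠ 0 ∧
    (∀ γ, ((q : ℝ) ^ (n - 1) - 1) * f γ =
        ∑ᶠ δ ∈ (symplecticPolarGraph B).neighborSet γ, f δ) ∧
    (symplecticPolarGraph B).IsClique T₀ ∧ (symplecticPolarGraph B).IsClique T₁ ∧
    T₀.ncard = q ^ (n - 1) ∧ T₁.ncard = q ^ (n - 1) ∧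
    (∀ x ∈ T₀, ∀ y ∈ T₁, ¬(symplecticPolarGraph B).Adj x y) := by
  classical
  subst hq
  have hdM : finrank F M = finrank F ↥(M ⊓ N) + 1 := by omega
  have hdN : finrank F N = finrank F ↥(M ⊓ N) + 1 := by omega
  have hLM : M ⊓ N ≤ M := inf_le_left
  have hLN : M ⊓ N ≤ N := inf_le_right
  have hM : ∀ w, M ≤ LinearMap.ker (B w) → w ∈ M := fun w hw =>
    mem_of_orthogonal hV halt hnd hMiso hMdim hw
  have hN : ∀ w, N ≤ LinearMap.ker (B w) → w ∈ N := fun w hw =>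
    mem_of_orthogonal hV halt hnd hNiso hNdim hw
  have hc₀ : T₀.ncard = Fintype.card F ^ (n - 1) := by
    rw [hT₀, ncard_points_diff hLM hdM, hLdim]
  have hc₁ : T₁.ncard = Fintype.card F ^ (n - 1) := by
    rw [hT₁, ncard_points_diff hLN hdN, hLdim]
  have hdisj : Disjoint T₀ T₁ := by
    rw [Set.disjoint_left, hT₀, hT₁]
    exact fun W h h' => h.2 (le_inf h.1 h'.1)
  have hcl : ∀ (U : Submodule F V), (∀ x ∈ U, ∀ y ∈ U, B x y = 0) →
      ∀ x y : {W : Submodule F V // finrank F W = 1}, x.1 ≤ U → y.1 ≤ U → x ≠ y →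
        (symplecticPolarGraph B).Adj x y := by
    intro U hU x y hx hy hxy
    rw [symplecticPolarGraph, SimpleGraph.fromRel_adj]
    exact ⟨hxy, Or.inl fun a ha b hb => hU a (hx ha) b (hy hb)⟩
  have hcl₀ : (symplecticPolarGraph B).IsClique T₀ := by
    intro x hx y hy hxy
    rw [hT₀] at hx hy
    exact hcl M hMiso x y hx.1 hy.1 hxy
  have hcl₁ : (symplecticPolarGraph B).IsClique T₁ := by
    intro x hx y hy hxy
    rw [hT₁] at hx hy
    exact hcl N hNiso x y hx.1 hy.1 hxy
  have hnon : ∀ x ∈ T₀, ∀ y ∈ T₁, ¬(symplecticPolarGraph B).Adj x y := by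
    intro x hx y hy hadj
    rw [hT₀] at hx
    rw [hT₁] at hy
    obtain ⟨v, -, hv⟩ := exists_gen x.1 x.2
    obtain ⟨w, -, hw⟩ := exists_gen y.1 y.2
    have h := ((adj_iff halt x y v hv).1 hadj).2
    obtain ⟨hx1, hx2⟩ := hx
    obtain ⟨hy1, hy2⟩ := hy
    rw [hv, Submodule.span_singleton_le_iff_mem] at hx1 hx2
    rw [hw, Submodule.span_singleton_le_iff_mem] at hy1 hy2 h
    exact form_ne_zero halt hLM hLN hdM hM hNiso hx1 hx2 hy1 (fun h' => hy2 ⟨h', hy1⟩) h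
  refine ⟨?_, fun γ => ?_, hcl₀, hcl₁, hc₀, hc₁, hnon⟩
  · rintro rfl
    have hne : T₀.ncard ≠ 0 := by
      rw [hc₀]
      exact pow_ne_zero _ Fintype.card_ne_zero
    obtain ⟨W, hW⟩ := Set.nonempty_of_ncard_ne_zero hne
    simpa using hf₀ W hW
  rw [finsum_mem_eq_ncard_sub _ T₀ T₁ hdisj f hf₀ hf₁ hfz]
  -- inside its own clique a vertex sees every other member, across it sees none
  have hself : ∀ T : Set {W : Submodule F V // finrank F W = 1},
      (symplecticPolarGraph B).IsClique T → T.ncard = Fintype.card F ^ (n - 1) → γ ∈ T →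
      (((symplecticPolarGraph B).neighborSet γ ∩ T).ncard : ℝ)
        = (Fintype.card F : ℝ) ^ (n - 1) - 1 := by
    intro T hT hcard hγ
    have : (symplecticPolarGraph B).neighborSet γ ∩ T = T \ {γ} := by
      ext δ
      simp only [Set.mem_inter_iff, SimpleGraph.mem_neighborSet, Set.mem_sdiff,
        Set.mem_singleton_iff]
      exact ⟨fun h => ⟨h.2, h.1.ne'⟩, fun h => ⟨hT hγ h.1 (Ne.symm h.2), h.1⟩⟩
    rw [this, ← Nat.cast_pow, ← hcard, ← Set.ncard_sdiff_singleton_add_one hγ]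
    push_cast
    ring
  have hcross : ∀ T : Set {W : Submodule F V // finrank F W = 1},
      (∀ δ ∈ T, ¬(symplecticPolarGraph B).Adj γ δ) →
      ((symplecticPolarGraph B).neighborSet γ ∩ T).ncard = 0 := by
    intro T hT
    rw [Set.ncard_eq_zero]
    ext δ
    simp only [Set.mem_inter_iff, SimpleGraph.mem_neighborSet, Set.mem_empty_iff_false, iff_false]
    exact fun h => hT δ h.2 h.1
  by_cases h0 : γ ∈ T₀
  · rw [hself T₀ hcl₀ hc₀ h0, hcross T₁ (hnon γ h0), hf₀ γ h0]
    simp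
  by_cases h1 : γ ∈ T₁
  · rw [hself T₁ hcl₁ hc₁ h1, hcross T₀ (fun δ hδ h => hnon δ hδ γ h1 h.symm), hf₁ γ h1]
    simp
  rw [hfz γ (by simp [h0, h1]), mul_zero, eq_comm, sub_eq_zero, Nat.cast_inj]
  obtain ⟨v, -, hv⟩ := exists_gen γ.1 γ.2
  have hinter : ∀ T : Set {W : Submodule F V // finrank F W = 1}, γ ∉ T →
      (symplecticPolarGraph B).neighborSet γ ∩ T
        = {W | W.1 ≤ LinearMap.ker (B v) ∧ W ∈ T} := by
    intro T hT
    ext δ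
    simp only [Set.mem_inter_iff, SimpleGraph.mem_neighborSet, Set.mem_ofPred_eq,
      adj_iff halt γ δ v hv]
    exact ⟨fun h => ⟨h.1.2, h.2⟩, fun h => ⟨⟨fun e => hT (e ▸ h.2), h.1⟩, h.2⟩⟩
  by_cases hγL : γ.1 ≤ M ⊓ N
  · have hall : ∀ T : Set {W : Submodule F V // finrank F W = 1}, γ ∉ T →
        (∀ δ ∈ T, δ.1 ≤ LinearMap.ker (B v)) →
        (symplecticPolarGraph B).neighborSet γ ∩ T = T := by
      intro T hT h
      rw [hinter T hT]
      exact Set.ext fun δ => ⟨fun h => h.2, fun hδ => ⟨h δ hδ, hδ⟩⟩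
    have hvL : v ∈ M ⊓ N := by
      rwa [hv, Submodule.span_singleton_le_iff_mem] at hγL
    rw [hall T₀ h0, hall T₁ h1, hc₀, hc₁]
    · intro δ hδ y hy
      rw [hT₁] at hδ
      exact hNiso v hvL.2 y (hδ.1 hy)
    · intro δ hδ y hy
      rw [hT₀] at hδ
      exact hMiso v hvL.1 y (hδ.1 hy)
  · have hMk : ¬ M ≤ LinearMap.ker (B v) := fun h => h0 (by
      rw [hT₀]
      exact ⟨by rw [hv, Submodule.span_singleton_le_iff_mem]; exact hM v h, hγL⟩)
    have hNk : ¬ N ≤ LinearMap.ker (B v) := fun h => h1 (by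
      rw [hT₁]
      exact ⟨by rw [hv, Submodule.span_singleton_le_iff_mem]; exact hN v h, hγL⟩)
    rw [hinter T₀ h0, hinter T₁ h1, hT₀, hT₁]
    exact (ncard_points_diff_ker hLM hdM (B v) hMk).trans
      (ncard_points_diff_ker hLN hdN (B v) hNk).symm
end

section
/- Let T0 and T1 be two disjoint sets of vertices of Sp(2n,q). Then T0 and T1 are cliques of size q^{n−1} with no vertex of T0 adjacent to any vertex of T1 if and only if there exist distinct n-dimensional totally isotropic subspaces M and N of V with L := M ∩ N of dimension n−1 such that T0 is the set of one-dimensional subspaces contained in M but not in L and T1 is the set of one-dimensional subspaces contained in N but not in L (or vice versa). -/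
/-!
Write `x^⊥` for the kernel of `B x`. If `x^⊥` does not contain a subspace `M`, then `M ⊓ x^⊥` is a
hyperplane of `M`, and translating a vector `m ∈ M \ x^⊥` by the elements of this hyperplane meets
each one-dimensional subspace of `M` outside `x^⊥` exactly once; hence there are `q ^ (dim M - 1)`
of them (`ncard_points_off_ker`).

Given two mutually non-adjacent cliques `T₀, T₁` of size `q ^ (n - 1)`, let `M, N` be their spans.
They are totally isotropic, so of dimension at most `n`. For a vector `x` spanning a point of `T₀`,
all points of `T₁` lie in `N` and off `x^⊥`, so the count forces `dim N = n` and makes `T₁` the set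
of *all* points of `N` off `x^⊥` (`clique_eq_points_off_ker`). In particular `N ⊓ x^⊥` does not
depend on `x`, so it is orthogonal to `M`; since `M` has dimension `n` it equals its own orthogonal
complement, and `N ⊓ x^⊥ = M ⊓ N` follows (`inf_eq_inf_ker`). Exchanging the roles of the two sets
describes `T₀`.

Conversely, for `y ∈ N \ M` one has `M ⊓ N = M ⊓ y^⊥`, because both are hyperplanes of `M`; this
gives both the non-adjacency and, by the same count, the sizes.
-/

open Module

section Helpers

variable {F V : Type*} [Field F] [AddCommGroup V] [Module F V]

/-! ### Adjacency of points -/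

lemma symplecticPolarGraph_adj {B : V →ₗ[F] V →ₗ[F] F} (halt : ∀ x : V, B x x = 0)
    (W₁ W₂ : {W : Submodule F V // finrank F W = 1}) :
    (symplecticPolarGraph B).Adj W₁ W₂ ↔
      W₁ ≠ W₂ ∧ ∀ x ∈ W₁.1, ∀ y ∈ W₂.1, B x y = 0 := by
  have hrefl : B.IsRefl := (show B.IsAlt from halt).isRefl
  unfold symplecticPolarGraph
  rw [SimpleGraph.fromRel_adj]
  constructor
  · rintro ⟨h, h1 | h1⟩
    · exact ⟨h, h1⟩
    · exact ⟨h, fun x hx y hy => hrefl _ _ (h1 y hy x hx)⟩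
  · rintro ⟨h, h1⟩
    exact ⟨h, Or.inl h1⟩

lemma exists_span_of_finrank_one (W : {W : Submodule F V // finrank F W = 1}) :
    ∃ w : V, w ≠ 0 ∧ W.1 = Submodule.span F {w} := by
  obtain ⟨⟨w, hw⟩, h0, h1⟩ := finrank_eq_one_iff'.1 W.2
  refine ⟨w, fun h => h0 (Subtype.ext h), le_antisymm ?_ ?_⟩
  · intro y hy
    obtain ⟨c, hc⟩ := h1 ⟨y, hy⟩
    exact Submodule.mem_span_singleton.2 ⟨c, congrArg Subtype.val hc⟩
  · simpa [Submodule.span_le] using hw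

/-- Distinct non-adjacent points have spanning vectors that are not orthogonal. -/
lemma apply_ne_zero_of_not_adj {B : V →ₗ[F] V →ₗ[F] F} (halt : ∀ x : V, B x x = 0)
    {W₁ W₂ : {W : Submodule F V // finrank F W = 1}} (hne : W₁ ≠ W₂)
    (h : ¬(symplecticPolarGraph B).Adj W₁ W₂) {x y : V} (hx : W₁.1 = Submodule.span F {x})
    (hy : W₂.1 = Submodule.span F {y}) : B x y ≠ 0 := by
  intro h0
  apply h
  rw [symplecticPolarGraph_adj halt]
  refine ⟨hne, fun u hu v hv => ?_⟩
  rw [hx] at hu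
  rw [hy] at hv
  obtain ⟨c, rfl⟩ := Submodule.mem_span_singleton.1 hu
  obtain ⟨d, rfl⟩ := Submodule.mem_span_singleton.1 hv
  simp [h0]

/-! ### Counting points off a hyperplane -/

lemma finrank_inf_ker_add_one [Finite V] (M : Submodule F V) (f : V →ₗ[F] F)
    (hf : ∃ m ∈ M, f m ≠ 0) : finrank F ↥(M ⊓ LinearMap.ker f) + 1 = finrank F M := by
  have : Module.Finite F V := Module.Finite.of_finite
  obtain ⟨m, hm, hfm⟩ := hf
  have hne : f.comp M.subtype ≠ 0 := fun h => hfm (by simpa using LinearMap.congr_fun h ⟨m, hm⟩)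
  have h1 := LinearMap.finrank_range_add_finrank_ker (f.comp M.subtype)
  have h2 : LinearMap.range (f.comp M.subtype) = ⊤ :=
    LinearMap.range_eq_top.2 (LinearMap.surjective hne)
  have h3 : finrank F (LinearMap.ker (f.comp M.subtype)) = finrank F ↥(M ⊓ LinearMap.ker f) := by
    rw [LinearMap.ker_comp, ← Submodule.map_comap_subtype]
    exact (Submodule.equivSubtypeMap M _).finrank_eq
  rw [h2, finrank_top, finrank_self] at h1
  omega

/-- A hyperplane section `M ⊓ ker f` misses exactly `q ^ (dim M - 1)` points of `M`. -/
lemma ncard_points_off_ker [Finite V] [Fintype F] (M : Submodule F V) (f : V →ₗ[F] F)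
    (hf : ∃ m ∈ M, f m ≠ 0) :
    {W : {W : Submodule F V // finrank F W = 1} | W.1 ≤ M ∧ ¬ W.1 ≤ LinearMap.ker f}.ncard
      = Fintype.card F ^ (finrank F M - 1) := by
  have : Module.Finite F V := Module.Finite.of_finite
  have hfr := finrank_inf_ker_add_one M f hf
  obtain ⟨m, hm, hfm⟩ := hf
  have hk : ∀ l : ↥(M ⊓ LinearMap.ker f), f (m + l) = f m := fun l => by
    have : f l = 0 := l.2.2
    simp [this]
  have hne : ∀ l : ↥(M ⊓ LinearMap.ker f), m + (l : V) ≠ 0 := fun l h => by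
    apply hfm
    rw [← hk l, h, map_zero]
  -- every point of `M` off `ker f` is spanned by `m + l` for a unique `l` in the hyperplane
  let g : ↥(M ⊓ LinearMap.ker f) → {W : Submodule F V // finrank F W = 1} :=
    fun l => ⟨Submodule.span F {m + (l : V)}, finrank_span_singleton (hne l)⟩
  have hinj : Function.Injective g := by
    intro l l' h
    have h1 : Submodule.span F {m + (l : V)} = Submodule.span F {m + (l' : V)} :=
      congrArg Subtype.val h
    have h2 : m + (l : V) ∈ Submodule.span F {m + (l' : V)} :=
      h1 ▸ Submodule.mem_span_singleton_self _
    obtain ⟨c, hc⟩ := Submodule.mem_span_singleton.1 h2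
    have h3 := congrArg f hc
    rw [map_smul, hk, hk, smul_eq_mul] at h3
    have hc1 : c = 1 := mul_right_cancel₀ hfm (by rw [h3, one_mul])
    rw [hc1, one_smul] at hc
    exact Subtype.ext (add_left_cancel hc).symm
  have hrange : {W : {W : Submodule F V // finrank F W = 1} |
      W.1 ≤ M ∧ ¬ W.1 ≤ LinearMap.ker f} = Set.range g := by
    ext W
    constructor
    · rintro ⟨hWM, hWk⟩
      obtain ⟨w, hw0, hw⟩ := exists_span_of_finrank_one W
      rw [hw, Submodule.span_singleton_le_iff_mem] at hWM hWk
      have hfw : f w ≠ 0 := hWk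
      have hc : f m / f w ≠ 0 := div_ne_zero hfm hfw
      refine ⟨⟨(f m / f w) • w - m, M.sub_mem (M.smul_mem _ hWM) hm, ?_⟩, ?_⟩
      · simp [hfw]
      · apply Subtype.ext
        simp only [g, add_sub_cancel]
        rw [hw]
        exact Submodule.span_singleton_smul_eq (IsUnit.mk0 _ hc) w
    · rintro ⟨l, rfl⟩
      simp only [g, Set.mem_ofPred_eq, Submodule.span_singleton_le_iff_mem, LinearMap.mem_ker, hk]
      exact ⟨M.add_mem hm l.2.1, hfm⟩
  rw [hrange, ← Set.image_univ, Set.ncard_image_of_injective _ hinj, Set.ncard_univ,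
    Module.natCard_eq_pow_finrank (K := F), Nat.card_eq_fintype_card]
  congr 1
  omega

/-! ### Totally isotropic subspaces and cliques -/

/-- A totally isotropic subspace has dimension at most `n`; one of dimension `n` contains every
vector orthogonal to it. -/
lemma finrank_le_of_isotropic [Finite V] {n : ℕ} (hV : finrank F V = 2 * n)
    {B : V →ₗ[F] V →ₗ[F] F} (halt : ∀ x : V, B x x = 0)
    (hnd : ∀ x : V, (∀ y : V, B x y = 0) → x = 0) {M : Submodule F V}
    (hM : ∀ x ∈ M, ∀ y ∈ M, B x y = 0) :
    finrank F M ≤ n ∧ (finrank F M = n → ∀ y, (∀ x ∈ M, B x y = 0) → y ∈ M) := by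
  have : Module.Finite F V := Module.Finite.of_finite
  have hrefl : B.IsRefl := (show B.IsAlt from halt).isRefl
  have hB : LinearMap.BilinForm.Nondegenerate B :=
    (LinearMap.IsRefl.nondegenerate_iff_separatingLeft hrefl).2 hnd
  have h1 := LinearMap.BilinForm.finrank_orthogonal hB M
  have hle : M ≤ LinearMap.BilinForm.orthogonal B M := fun y hy x hx => hM x hx y hy
  have h2 := Submodule.finrank_mono hle
  have h3 := Submodule.finrank_le M
  refine ⟨by omega, fun h y hy => ?_⟩
  rw [Submodule.eq_of_le_of_finrank_eq hle (by omega)]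
  exact fun x hx => hy x hx

lemma isotropic_iSup_of_isClique {B : V →ₗ[F] V →ₗ[F] F} (halt : ∀ x : V, B x x = 0)
    {T : Set {W : Submodule F V // finrank F W = 1}} (hT : (symplecticPolarGraph B).IsClique T) :
    ∀ x ∈ ⨆ W ∈ T, W.1, ∀ y ∈ ⨆ W ∈ T, W.1, B x y = 0 := by
  have hrefl : B.IsRefl := (show B.IsAlt from halt).isRefl
  have key : ∀ W₁ ∈ T, ∀ W₂ ∈ T, ∀ x ∈ W₁.1, ∀ y ∈ W₂.1, B x y = 0 := by
    intro W₁ h₁ W₂ h₂ x hx y hy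
    by_cases h : W₁ = W₂
    · subst h
      obtain ⟨w, -, hw⟩ := exists_span_of_finrank_one W₁
      rw [hw] at hx hy
      obtain ⟨c, rfl⟩ := Submodule.mem_span_singleton.1 hx
      obtain ⟨d, rfl⟩ := Submodule.mem_span_singleton.1 hy
      simp [halt]
    · exact ((symplecticPolarGraph_adj halt _ _).1 (hT h₁ h₂ h)).2 x hx y hy
  have step : ∀ W₁ ∈ T, ∀ x ∈ W₁.1, ∀ y ∈ ⨆ W ∈ T, W.1, B x y = 0 := by
    intro W₁ h₁ x hx
    have : ⨆ W ∈ T, W.1 ≤ LinearMap.ker (B x) :=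
      iSup₂_le fun W₂ h₂ y hy => key W₁ h₁ W₂ h₂ x hx y hy
    exact fun y hy => this hy
  intro x hx y hy
  have : ⨆ W ∈ T, W.1 ≤ LinearMap.ker (B y) :=
    iSup₂_le fun W₁ h₁ x hx => hrefl _ _ (step W₁ h₁ x hx y hy)
  exact hrefl _ _ (this hx)

/-! ### Isolated pairs of cliques -/

/-- A clique of size `q ^ (n - 1)` all of whose points are non-orthogonal to `x` spans a maximal
totally isotropic subspace and consists of all points of this subspace off `ker (B x)`. -/
lemma clique_eq_points_off_ker [Finite V] [Fintype F] {n : ℕ} (hn : 2 ≤ n)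
    (hV : finrank F V = 2 * n) {B : V →ₗ[F] V →ₗ[F] F} (halt : ∀ x : V, B x x = 0)
    (hnd : ∀ x : V, (∀ y : V, B x y = 0) → x = 0)
    {T : Set {W : Submodule F V // finrank F W = 1}} (hT : (symplecticPolarGraph B).IsClique T)
    (hcard : T.ncard = Fintype.card F ^ (n - 1)) {x : V}
    (hx : ∀ W ∈ T, ¬ W.1 ≤ LinearMap.ker (B x)) :
    finrank F ↥(⨆ W ∈ T, W.1) = n ∧
      (∃ m ∈ ⨆ W ∈ T, W.1, B x m ≠ 0) ∧
      T = {W | W.1 ≤ ⨆ W ∈ T, W.1 ∧ ¬ W.1 ≤ LinearMap.ker (B x)} := by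
  have hq : 1 < Fintype.card F := Fintype.one_lt_card
  have hle : ∀ W ∈ T, W.1 ≤ ⨆ W ∈ T, W.1 := fun W hW => le_iSup₂_of_le W hW le_rfl
  have hdim := (finrank_le_of_isotropic hV halt hnd (isotropic_iSup_of_isClique halt hT)).1
  have hTne : T.Nonempty := by
    apply Set.nonempty_of_ncard_ne_zero
    rw [hcard]
    positivity
  obtain ⟨W, hW⟩ := hTne
  have hex : ∃ m ∈ ⨆ W ∈ T, W.1, B x m ≠ 0 := by
    obtain ⟨m, hm, hm'⟩ := SetLike.not_le_iff_exists.1 (hx W hW)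
    exact ⟨m, hle W hW hm, hm'⟩
  have hpos := finrank_inf_ker_add_one _ _ hex
  have hsub : T ⊆ {W | W.1 ≤ ⨆ W ∈ T, W.1 ∧ ¬ W.1 ≤ LinearMap.ker (B x)} :=
    fun W hW => ⟨hle W hW, hx W hW⟩
  have hcount := ncard_points_off_ker _ _ hex
  have hfin : finrank F ↥(⨆ W ∈ T, W.1) = n := by
    have h := Set.ncard_le_ncard hsub (Set.toFinite _)
    rw [hcount, hcard, Nat.pow_le_pow_iff_right hq] at h
    omega
  refine ⟨hfin, hex, Set.eq_of_subset_of_ncard_le hsub ?_ (Set.toFinite _)⟩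
  rw [hcount, hcard, hfin]

/-- If the points of `T` are those of a subspace `N` off `ker (B x)`, for every `x` spanning a
point of the clique `S`, and the span `M` of `S` is maximal totally isotropic, then `N` meets each
of these kernels in `M ⊓ N`. -/
lemma inf_eq_inf_ker [Finite V] {n : ℕ} (hV : finrank F V = 2 * n)
    {B : V →ₗ[F] V →ₗ[F] F} (halt : ∀ x : V, B x x = 0)
    (hnd : ∀ x : V, (∀ y : V, B x y = 0) → x = 0)
    {S T : Set {W : Submodule F V // finrank F W = 1}} {N : Submodule F V}
    (hS : (symplecticPolarGraph B).IsClique S) (hSn : finrank F ↥(⨆ W ∈ S, W.1) = n)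
    (hT : ∀ A ∈ S, ∀ x, A.1 = Submodule.span F {x} →
      T = {W | W.1 ≤ N ∧ ¬ W.1 ≤ LinearMap.ker (B x)})
    {A : {W : Submodule F V // finrank F W = 1}} (hA : A ∈ S) {x : V}
    (hx : A.1 = Submodule.span F {x}) :
    (⨆ W ∈ S, W.1) ⊓ N = N ⊓ LinearMap.ker (B x) := by
  have hrefl : B.IsRefl := (show B.IsAlt from halt).isRefl
  have hiso := isotropic_iSup_of_isClique halt hS
  have hxS : x ∈ ⨆ W ∈ S, W.1 := by
    refine (le_iSup₂_of_le (f := fun W (_ : W ∈ S) => W.1) A hA le_rfl) ?_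
    rw [hx]
    exact Submodule.mem_span_singleton_self x
  apply le_antisymm
  · exact fun y hy => ⟨hy.2, hiso x hxS y hy.1⟩
  · rintro y ⟨hyN, hyx⟩
    refine ⟨?_, hyN⟩
    by_cases hy0 : y = 0
    · rw [hy0]
      exact Submodule.zero_mem _
    apply (finrank_le_of_isotropic hV halt hnd hiso).2 hSn
    -- `⟨y⟩` is not in `T`, hence it is orthogonal to every point of `S`
    let Y : {W : Submodule F V // finrank F W = 1} :=
      ⟨Submodule.span F {y}, finrank_span_singleton hy0⟩
    have hYN : Y.1 ≤ N := (Submodule.span_singleton_le_iff_mem _ _).2 hyN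
    have hYT : Y ∉ T := by
      rw [hT A hA x hx]
      exact fun h => h.2 ((Submodule.span_singleton_le_iff_mem _ _).2 hyx)
    have hle : ⨆ W ∈ S, W.1 ≤ LinearMap.ker (B y) := by
      refine iSup₂_le fun A' hA' => ?_
      obtain ⟨x', -, hx'⟩ := exists_span_of_finrank_one A'
      rw [hx', Submodule.span_singleton_le_iff_mem]
      by_contra hcon
      apply hYT
      rw [hT A' hA' x' hx']
      refine ⟨hYN, fun h => hcon ?_⟩
      exact hrefl _ _ (h (Submodule.mem_span_singleton_self y))
    exact fun z hz => hrefl _ _ (hle hz)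

/-- The forward implication, up to the description of the clique `S`, which is obtained by
exchanging `S` and `T`. -/
lemma points_of_isolated_cliques [Finite V] [Fintype F] {n : ℕ} (hn : 2 ≤ n)
    (hV : finrank F V = 2 * n) {B : V →ₗ[F] V →ₗ[F] F} (halt : ∀ x : V, B x x = 0)
    (hnd : ∀ x : V, (∀ y : V, B x y = 0) → x = 0)
    {S T : Set {W : Submodule F V // finrank F W = 1}}
    (hS : (symplecticPolarGraph B).IsClique S) (hT : (symplecticPolarGraph B).IsClique T)
    (hcS : S.ncard = Fintype.card F ^ (n - 1)) (hcT : T.ncard = Fintype.card F ^ (n - 1))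
    (hdisj : Disjoint S T) (hadj : ∀ x ∈ S, ∀ y ∈ T, ¬(symplecticPolarGraph B).Adj x y) :
    finrank F ↥(⨆ W ∈ S, W.1) = n ∧
      finrank F ↥((⨆ W ∈ S, W.1) ⊓ ⨆ W ∈ T, W.1) = n - 1 ∧
      T = {W | W.1 ≤ ⨆ W ∈ T, W.1 ∧ ¬ W.1 ≤ (⨆ W ∈ S, W.1) ⊓ ⨆ W ∈ T, W.1} := by
  have hq : 1 < Fintype.card F := Fintype.one_lt_card
  have hrefl : B.IsRefl := (show B.IsAlt from halt).isRefl
  have hne : ∀ A ∈ S, ∀ C ∈ T, ∀ x y, A.1 = Submodule.span F {x} → C.1 = Submodule.span F {y} →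
      B x y ≠ 0 := fun A hA C hC x y hx hy =>
    apply_ne_zero_of_not_adj halt (hdisj.ne_of_mem hA hC)
      (hadj A hA C hC) hx hy
  have hnonempty : ∀ R : Set {W : Submodule F V // finrank F W = 1},
      R.ncard = Fintype.card F ^ (n - 1) → R.Nonempty := by
    intro R hR
    apply Set.nonempty_of_ncard_ne_zero
    rw [hR]
    positivity
  have hTS : ∀ A ∈ S, ∀ x, A.1 = Submodule.span F {x} →
      ∀ W ∈ T, ¬ W.1 ≤ LinearMap.ker (B x) := by
    intro A hA x hx W hW h
    obtain ⟨y, -, hy⟩ := exists_span_of_finrank_one W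
    rw [hy, Submodule.span_singleton_le_iff_mem] at h
    exact hne A hA W hW x y hx hy h
  obtain ⟨A, hA⟩ := hnonempty S hcS
  obtain ⟨C, hC⟩ := hnonempty T hcT
  obtain ⟨x, -, hx⟩ := exists_span_of_finrank_one A
  obtain ⟨y, -, hy⟩ := exists_span_of_finrank_one C
  have hSn : finrank F ↥(⨆ W ∈ S, W.1) = n := by
    refine (clique_eq_points_off_ker hn hV halt hnd hS hcS (x := y) ?_).1
    intro W hW h
    obtain ⟨z, -, hz⟩ := exists_span_of_finrank_one W
    rw [hz, Submodule.span_singleton_le_iff_mem] at h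
    exact hne W hW C hC z y hz hy (hrefl _ _ h)
  obtain ⟨hTn, hex, hTeq⟩ := clique_eq_points_off_ker hn hV halt hnd hT hcT (hTS A hA x hx)
  have hinf := inf_eq_inf_ker hV halt hnd hS hSn
    (fun A hA x hx => (clique_eq_points_off_ker hn hV halt hnd hT hcT (hTS A hA x hx)).2.2) hA hx
  have hfr := finrank_inf_ker_add_one _ _ hex
  rw [hinf]
  refine ⟨hSn, by omega, ?_⟩
  refine hTeq.trans (Set.ext fun W => ?_)
  simp only [Set.mem_ofPred_eq, le_inf_iff]
  tauto

/-! ### Pairs of maximal totally isotropic subspaces -/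

/-- The part of the backward implication that concerns the clique in `M`, and the non-adjacency;
the clique in `N` is obtained by exchanging `M` and `N`. -/
lemma points_of_isotropic [Finite V] [Fintype F] {n : ℕ}
    (hV : finrank F V = 2 * n) {B : V →ₗ[F] V →ₗ[F] F} (halt : ∀ x : V, B x x = 0)
    (hnd : ∀ x : V, (∀ y : V, B x y = 0) → x = 0) {M N : Submodule F V}
    (hM : ∀ x ∈ M, ∀ y ∈ M, B x y = 0) (hN : ∀ x ∈ N, ∀ y ∈ N, B x y = 0)
    (hMn : finrank F M = n) (hNn : finrank F N = n) (hn : 2 ≤ n)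
    (hMN : finrank F ↥(M ⊓ N) = n - 1) :
    (symplecticPolarGraph B).IsClique {W | W.1 ≤ M ∧ ¬ W.1 ≤ M ⊓ N} ∧
      {W : {W : Submodule F V // finrank F W = 1} | W.1 ≤ M ∧ ¬ W.1 ≤ M ⊓ N}.ncard
        = Fintype.card F ^ (n - 1) ∧
      ∀ W₁ ∈ {W : {W : Submodule F V // finrank F W = 1} | W.1 ≤ M ∧ ¬ W.1 ≤ M ⊓ N},
      ∀ W₂ ∈ {W : {W : Submodule F V // finrank F W = 1} | W.1 ≤ N ∧ ¬ W.1 ≤ M ⊓ N},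
        ¬(symplecticPolarGraph B).Adj W₁ W₂ := by
  have : Module.Finite F V := Module.Finite.of_finite
  have hrefl : B.IsRefl := (show B.IsAlt from halt).isRefl
  -- both sides are hyperplanes of `M`, as `y` is not orthogonal to `M`
  have key : ∀ y ∈ N, y ∉ M →
      (∃ m ∈ M, B y m ≠ 0) ∧ M ⊓ N = M ⊓ LinearMap.ker (B y) := by
    intro y hyN hyM
    have hex : ∃ m ∈ M, B y m ≠ 0 := by
      by_contra! h
      exact hyM ((finrank_le_of_isotropic hV halt hnd hM).2 hMn y
        fun x hx => hrefl _ _ (h x hx))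
    have hfr := finrank_inf_ker_add_one M (B y) hex
    refine ⟨hex, Submodule.eq_of_le_of_finrank_eq ?_ (by omega)⟩
    exact fun z hz => ⟨hz.1, hN y hyN z hz.2⟩
  refine ⟨?_, ?_, ?_⟩
  · intro W₁ h₁ W₂ h₂ hne
    exact (symplecticPolarGraph_adj halt _ _).2
      ⟨hne, fun x hx y hy => hM x (h₁.1 hx) y (h₂.1 hy)⟩
  · have hNM : ¬ N ≤ M := by
      intro h
      rw [inf_eq_right.2 h] at hMN
      omega
    obtain ⟨y, hyN, hyM⟩ := SetLike.not_le_iff_exists.1 hNM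
    obtain ⟨hex, hinf⟩ := key y hyN hyM
    rw [hinf, ← hMn, ← ncard_points_off_ker M (B y) hex]
    congr 1
    ext W
    simp only [Set.mem_ofPred_eq, le_inf_iff]
    tauto
  · rintro W₁ ⟨h₁, h₁'⟩ W₂ ⟨h₂, h₂'⟩ hadj
    have hperp := ((symplecticPolarGraph_adj halt _ _).1 hadj).2
    have hW₂ : ¬ W₂.1 ≤ M := fun h => h₂' (le_inf h h₂)
    obtain ⟨y, hy, hyM⟩ := SetLike.not_le_iff_exists.1 hW₂
    obtain ⟨-, hinf⟩ := key y (h₂ hy) hyM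
    apply h₁'
    rw [hinf]
    exact fun z hz => ⟨h₁ hz, hrefl _ _ (hperp z hz y hy)⟩

end Helpers

/-- two disjoint vertex sets `T₀, T₁` of `Sp(2n,q)` are isolated cliques of size
`q^(n-1)` iff they arise from a pair of distinct `n`-dimensional totally isotropic subspaces
`M, N` with `dim (M ⊓ N) = n - 1` as the one-dimensional subspaces of `M \ (M ⊓ N)` and
`N \ (M ⊓ N)` respectively (or vice versa). -/
theorem stmt3 {F V : Type*} [Field F] [Fintype F] [AddCommGroup V] [Module F V] [Finite V]
    (q n : ℕ) (hq : Fintype.card F = q) (hn : 2 ≤ n) (hV : finrank F V = 2 * n)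
    (B : V →ₗ[F] V →ₗ[F] F)
    (halt : ∀ x : V, B x x = 0)
    (hnd : ∀ x : V, (∀ y : V, B x y = 0) → x = 0)
    (T₀ T₁ : Set {W : Submodule F V // finrank F W = 1})
    (hdisj : Disjoint T₀ T₁) :
    ((symplecticPolarGraph B).IsClique T₀ ∧ (symplecticPolarGraph B).IsClique T₁ ∧
      T₀.ncard = q ^ (n - 1) ∧ T₁.ncard = q ^ (n - 1) ∧
      (∀ x ∈ T₀, ∀ y ∈ T₁, ¬(symplecticPolarGraph B).Adj x y)) ↔
    (∃ M N : Submodule F V, M ≠ N ∧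
      (∀ x ∈ M, ∀ y ∈ M, B x y = 0) ∧ (∀ x ∈ N, ∀ y ∈ N, B x y = 0) ∧
      finrank F M = n ∧ finrank F N = n ∧ finrank F ↥(M ⊓ N) = n - 1 ∧
      ((T₀ = {W | W.1 ≤ M ∧ ¬W.1 ≤ M ⊓ N} ∧ T₁ = {W | W.1 ≤ N ∧ ¬W.1 ≤ M ⊓ N}) ∨
       (T₀ = {W | W.1 ≤ N ∧ ¬W.1 ≤ M ⊓ N} ∧ T₁ = {W | W.1 ≤ M ∧ ¬W.1 ≤ M ⊓ N}))) := by
  subst hq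
  constructor
  · rintro ⟨h0, h1, hc0, hc1, hadj⟩
    obtain ⟨hf0, hfi, hT1⟩ := points_of_isolated_cliques hn hV halt hnd h0 h1 hc0 hc1 hdisj hadj
    obtain ⟨hf1, -, hT0⟩ := points_of_isolated_cliques hn hV halt hnd h1 h0 hc1 hc0 hdisj.symm
      (fun x hx y hy h => hadj y hy x hx h.symm)
    rw [inf_comm] at hT0
    refine ⟨⨆ W ∈ T₀, W.1, ⨆ W ∈ T₁, W.1, ?_, isotropic_iSup_of_isClique halt h0,
      isotropic_iSup_of_isClique halt h1, hf0, hf1, hfi, Or.inl ⟨hT0, hT1⟩⟩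
    intro h
    rw [← h, inf_idem] at hfi
    omega
  · rintro ⟨M, N, -, hM, hN, hMn, hNn, hMN, h⟩
    obtain ⟨a1, a2, a3⟩ := points_of_isotropic hV halt hnd hM hN hMn hNn hn hMN
    obtain ⟨b1, b2, b3⟩ := points_of_isotropic hV halt hnd hN hM hNn hMn hn (inf_comm M N ▸ hMN)
    rw [inf_comm N M] at b1 b2 b3
    rcases h with ⟨rfl, rfl⟩ | ⟨rfl, rfl⟩
    · exact ⟨a1, b1, a2, b2, a3⟩
    · exact ⟨b1, a1, b2, a2, b3⟩
end

section
/- If C is a maximal clique of the affine polar graph VO(Q) (i.e. a clique not properly contained in any other clique), then there exists a maximal totally singular subspace W of V such that C = v + W for every v ∈ C, and W is the unique totally singular subspace of V with this property. -/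
/-!
Fix a point `v₀` of the maximal clique `C` and let `W` be the span of the differences `c - v₀`,
`c ∈ C`. These differences are singular, and they are pairwise orthogonal because
`Q (c - d) = 0` as well (`polar_sub_sub_eq_zero`); hence `W` is totally singular
(`totallySingular_span`). For every totally singular `U ≥ W` the coset `v₀ + U` is a clique
containing `C`, so it equals `C`. Taking `U = W` gives `C = v₀ + W`, and comparing the two cosets
gives `U = W`, the maximality of `W`. Uniqueness holds since a coset of a subspace through `v₀`
determines the subspace.
-/

open Module

/-- The affine polar graph `VO(Q)`: vertex set `V`, distinct `u, w` adjacent iff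
`Q (u - w) = 0` (since `Q (w - u) = Q (u - w)`, symmetrizing is harmless). -/
def affinePolarGraph {F V : Type*} [Field F] [AddCommGroup V] [Module F V]
    (Q : QuadraticForm F V) : SimpleGraph V :=
  SimpleGraph.fromRel (fun u w => Q (u - w) = 0)

theorem affinePolarGraph_isClique_iff {F V : Type*} [Field F] [AddCommGroup V] [Module F V]
    {Q : QuadraticForm F V} {D : Set V} :
    (affinePolarGraph Q).IsClique D ↔ ∀ x ∈ D, ∀ y ∈ D, Q (x - y) = 0 := by
  constructor
  · intro h x hx y hy
    by_cases hxy : x = y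
    · simp [hxy]
    · have h1 := h hx hy hxy
      rw [affinePolarGraph, SimpleGraph.fromRel_adj] at h1
      rcases h1.2 with h2 | h2
      · exact h2
      · rwa [← neg_sub, QuadraticMap.map_neg]
  · intro h x hx y hy hxy
    rw [affinePolarGraph, SimpleGraph.fromRel_adj]
    exact ⟨hxy, Or.inl (h x hx y hy)⟩

/-- The differences of a triangle `c, d, v` of `VO(Q)` based at `v` are orthogonal. -/
theorem polar_sub_sub_eq_zero {F V : Type*} [Field F] [AddCommGroup V] [Module F V]
    {Q : QuadraticForm F V} {c d v : V} (hc : Q (c - v) = 0) (hd : Q (d - v) = 0)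
    (hcd : Q (c - d) = 0) : QuadraticMap.polar Q (c - v) (d - v) = 0 := by
  have h : QuadraticMap.polar Q (c - v) (-(d - v)) = 0 := by
    rw [QuadraticMap.polar, QuadraticMap.map_neg, hc, hd,
      show c - v + -(d - v) = c - d by abel, hcd]
    simp
  rwa [QuadraticMap.polar_neg_right, neg_eq_zero] at h

/-- The span of pairwise orthogonal singular vectors is totally singular. Singularity of the
generators is a separate hypothesis because it does not follow from orthogonality in
characteristic two. -/
theorem totallySingular_span {F V : Type*} [Field F] [AddCommGroup V] [Module F V]
    {Q : QuadraticForm F V} {S : Set V} (hS : ∀ x ∈ S, Q x = 0)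
    (hS' : ∀ x ∈ S, ∀ y ∈ S, QuadraticMap.polar Q x y = 0) :
    ∀ x ∈ Submodule.span F S, Q x = 0 := by
  have h1 : ∀ x ∈ S, ∀ y ∈ Submodule.span F S, QuadraticMap.polar Q x y = 0 := by
    intro x hx y hy
    induction hy using Submodule.span_induction with
    | mem y hy => exact hS' x hx y hy
    | zero => simp
    | add y z _ _ hy hz => rw [QuadraticMap.polar_add_right, hy, hz, add_zero]
    | smul a y _ hy => rw [QuadraticMap.polar_smul_right, hy, smul_zero]
  have h2 : ∀ x ∈ Submodule.span F S, ∀ y ∈ Submodule.span F S,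
      QuadraticMap.polar Q x y = 0 := by
    intro x hx y hy
    induction hx using Submodule.span_induction with
    | mem x hx => exact h1 x hx y hy
    | zero => simp
    | add x z _ _ hx hz => rw [QuadraticMap.polar_add_left, hx, hz, add_zero]
    | smul a x _ hx => rw [QuadraticMap.polar_smul_left, hx, smul_zero]
  intro x hx
  induction hx using Submodule.span_induction with
  | mem x hx => exact hS x hx
  | zero => simp
  | add x y hx hy hx' hy' => rw [QuadraticMap.map_add Q, hx', hy', h2 x hx y hy]; simp
  | smul a x _ hx => rw [QuadraticMap.map_smul, hx, smul_zero]

/-- a maximal clique of `VO(Q)` is `v + W` (for each of its elements `v`) for a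
maximal totally singular subspace `W`, which is the unique totally singular subspace with this
property. -/
theorem stmt6 {F V : Type*} [Field F] [Fintype F] [AddCommGroup V] [Module F V] [Finite V]
    (q m : ℕ) (hq : Fintype.card F = q) (hm : 1 ≤ m) (hV : finrank F V = 2 * m)
    (Q : QuadraticForm F V)
    (hnd : ∀ x : V, (∀ y : V, QuadraticMap.polar Q x y = 0) → x = 0)
    (C : Set V) (hC : (affinePolarGraph Q).IsClique C)
    (hmax : ∀ D : Set V, (affinePolarGraph Q).IsClique D → C ⊆ D → D = C) :
    ∃ W : Submodule F V, (∀ x ∈ W, Q x = 0) ∧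
      (∀ W' : Submodule F V, (∀ x ∈ W', Q x = 0) → W ≤ W' → W' = W) ∧
      (∀ v ∈ C, C = (v + ·) '' (W : Set V)) ∧
      (∀ W'' : Submodule F V, (∀ x ∈ W'', Q x = 0) →
        (∀ v ∈ C, C = (v + ·) '' (W'' : Set V)) → W'' = W) := by
  have hadj := @affinePolarGraph_isClique_iff F V _ _ _ Q
  obtain ⟨v₀, hv₀⟩ : C.Nonempty := by
    rw [Set.nonempty_iff_ne_empty]
    rintro rfl
    have h := hmax {0} (by simp) (Set.empty_subset _)
    simp at h
  rw [hadj] at hC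
  let W : Submodule F V := Submodule.span F ((· - v₀) '' C)
  have hW : ∀ x ∈ W, Q x = 0 := by
    apply totallySingular_span
    · rintro _ ⟨c, hc, rfl⟩
      exact hC c hc v₀ hv₀
    · rintro _ ⟨c, hc, rfl⟩ _ ⟨d, hd, rfl⟩
      exact polar_sub_sub_eq_zero (hC c hc v₀ hv₀) (hC d hd v₀ hv₀) (hC c hc d hd)
  -- A totally singular subspace above `W` gives a clique above `C`, hence `C` itself.
  have key : ∀ U : Submodule F V, (∀ x ∈ U, Q x = 0) → W ≤ U →
      (v₀ + ·) '' (U : Set V) = C := by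
    intro U hU hWU
    apply hmax
    · rw [hadj]
      rintro _ ⟨x, hx, rfl⟩ _ ⟨y, hy, rfl⟩
      simpa using hU _ (U.sub_mem hx hy)
    · intro c hc
      exact ⟨c - v₀, hWU (Submodule.subset_span ⟨c, hc, rfl⟩), by simp⟩
  have inj : ∀ U : Submodule F V, (v₀ + ·) '' (U : Set V) = C → U = W := by
    intro U h
    have h' := h.trans (key W hW le_rfl).symm
    exact SetLike.coe_injective ((add_right_injective v₀).image_injective h')
  refine ⟨W, hW, fun U hU hWU => inj U (key U hU hWU), ?_,
    fun U _ h => inj U (h v₀ hv₀).symm⟩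
  intro v hv
  have hC' := key W hW le_rfl
  have hvW : v - v₀ ∈ W := Submodule.subset_span ⟨v, hv, rfl⟩
  rw [← hC']
  ext x
  constructor
  · rintro ⟨w, hw, rfl⟩
    exact ⟨w - (v - v₀), W.sub_mem hw hvW, by simp only []; abel⟩
  · rintro ⟨w, hw, rfl⟩
    exact ⟨w + (v - v₀), W.add_mem hw hvW, by simp only []; abel⟩
end

section
/- If C and D are distinct maximal cliques of the affine polar graph VO(Q) with C ∩ D ≠ ∅, then there exist maximal totally singular subspaces M and N of V such that for every v ∈ C ∩ D one has C = v + M, D = v + N, and C ∩ D = v + (M ∩ N). -/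
/-!
A clique `C` through `v` has `Q (x - v) = Q (y - v) = Q (x - y) = 0` for `x, y ∈ C`, so the polar
form vanishes on pairs from `C - v` and hence `Q` vanishes on the span `M` of `C - v`
(`singular_span`). Then `v + M` is a clique containing `C`, so `C = v + M` when `C` is maximal,
and a larger totally singular subspace would give a larger clique
(`exists_submodule_of_maximal_clique`). Since `M` is a subspace, every point of `C` serves as
base point. Applying this to both cliques gives `M` and `N`, and translation by a common point
commutes with intersection.
-/

open Module

theorem isClique_affinePolarGraph_iff {F V : Type*} [Field F] [AddCommGroup V] [Module F V]
    (Q : QuadraticForm F V) (C : Set V) :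
    (affinePolarGraph Q).IsClique C ↔ ∀ x ∈ C, ∀ y ∈ C, Q (x - y) = 0 := by
  constructor
  · intro h x hx y hy
    by_cases hxy : x = y
    · simp [hxy]
    · have := h hx hy hxy
      rw [affinePolarGraph, SimpleGraph.fromRel_adj] at this
      rcases this.2 with h | h
      · exact h
      · rw [← neg_sub, QuadraticMap.map_neg, h]
  · intro h x hx y hy hxy
    rw [affinePolarGraph, SimpleGraph.fromRel_adj]
    exact ⟨hxy, Or.inl (h x hx y hy)⟩

/-- In every characteristic, `Q x = Q y = Q (x - y) = 0` forces the polar form to vanish at `(x, y)`;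
bilinearity extends this to the span. -/
theorem singular_span {F V : Type*} [Field F] [AddCommGroup V] [Module F V]
    (Q : QuadraticForm F V) (S : Set V) (hQ : ∀ x ∈ S, Q x = 0)
    (hsub : ∀ x ∈ S, ∀ y ∈ S, Q (x - y) = 0) :
    ∀ x ∈ Submodule.span F S, Q x = 0 := by
  have hS : ∀ x ∈ S, ∀ y ∈ S, QuadraticMap.polar Q x y = 0 := by
    intro x hx y hy
    have h : QuadraticMap.polar Q x (-y) = 0 := by
      rw [QuadraticMap.polar, ← sub_eq_add_neg, hsub x hx y hy, QuadraticMap.map_neg,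
        hQ x hx, hQ y hy]
      simp
    rwa [QuadraticMap.polar_neg_right, neg_eq_zero] at h
  have hpolar : ∀ x ∈ Submodule.span F S, ∀ y ∈ Submodule.span F S,
      QuadraticMap.polar Q x y = 0 := by
    intro x hx y hy
    induction hx, hy using Submodule.span_induction₂ with
    | mem_mem x y hx hy => exact hS x hx y hy
    | zero_left y hy => simp
    | zero_right x hx => simp
    | add_left x y z _ _ _ h₁ h₂ => rw [QuadraticMap.polar_add_left, h₁, h₂, add_zero]
    | add_right x y z _ _ _ h₁ h₂ => rw [QuadraticMap.polar_add_right, h₁, h₂, add_zero]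
    | smul_left r x y _ _ h => rw [QuadraticMap.polar_smul_left, h, smul_zero]
    | smul_right r x y _ _ h => rw [QuadraticMap.polar_smul_right, h, smul_zero]
  intro x hx
  induction hx using Submodule.span_induction with
  | mem x hx => exact hQ x hx
  | zero => exact QuadraticMap.map_zero Q
  | add x y hx hy h₁ h₂ => rw [QuadraticMap.map_add Q, h₁, h₂, hpolar x hx y hy]; simp
  | smul r x _ h => rw [QuadraticMap.map_smul, h, smul_zero]

theorem isClique_translate {F V : Type*} [Field F] [AddCommGroup V] [Module F V]
    (Q : QuadraticForm F V) (v : V) (M : Submodule F V) (hM : ∀ x ∈ M, Q x = 0) :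
    (affinePolarGraph Q).IsClique ((v + ·) '' (M : Set V)) := by
  rw [isClique_affinePolarGraph_iff]
  rintro _ ⟨x, hx, rfl⟩ _ ⟨y, hy, rfl⟩
  simpa using hM _ (M.sub_mem hx hy)

/-- The subspace `M` is the same for all base points `v ∈ C`: it is the set of differences of
elements of `C`. -/
theorem exists_submodule_of_maximal_clique {F V : Type*} [Field F] [AddCommGroup V] [Module F V]
    (Q : QuadraticForm F V) (C : Set V) (hC : (affinePolarGraph Q).IsClique C)
    (hCmax : ∀ E : Set V, (affinePolarGraph Q).IsClique E → C ⊆ E → E = C)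
    (hne : C.Nonempty) :
    ∃ M : Submodule F V, (∀ x ∈ M, Q x = 0) ∧
      (∀ M' : Submodule F V, (∀ x ∈ M', Q x = 0) → M ≤ M' → M' = M) ∧
      ∀ v ∈ C, C = (v + ·) '' (M : Set V) := by
  obtain ⟨w, hw⟩ := hne
  have hC' := (isClique_affinePolarGraph_iff Q C).1 hC
  let M := Submodule.span F ((fun x => x - w) '' C)
  have hM : ∀ x ∈ M, Q x = 0 := by
    apply singular_span
    · rintro _ ⟨x, hx, rfl⟩
      exact hC' x hx w hw
    · rintro _ ⟨x, hx, rfl⟩ _ ⟨y, hy, rfl⟩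
      simpa using hC' x hx y hy
  have hsub : ∀ x ∈ C, x - w ∈ M := fun x hx => Submodule.subset_span ⟨x, hx, rfl⟩
  have hmem : ∀ M' : Submodule F V, (∀ x ∈ M', Q x = 0) → M ≤ M' →
      (w + ·) '' (M' : Set V) = C := fun M' hM' hle =>
    hCmax _ (isClique_translate Q w M' hM') fun x hx =>
      ⟨x - w, hle (hsub x hx), add_sub_cancel w x⟩
  refine ⟨M, hM, fun M' hM' hle => le_antisymm (fun x hx => ?_) hle, fun v hv => ?_⟩
  · have : w + x ∈ C := hmem M' hM' hle ▸ ⟨x, hx, rfl⟩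
    simpa using hsub _ this
  · refine (hCmax _ (isClique_translate Q v M hM) fun x hx => ⟨x - v, ?_, add_sub_cancel v x⟩).symm
    simpa using M.sub_mem (hsub x hx) (hsub v hv)

/-- two distinct intersecting maximal cliques of `VO(Q)` are simultaneous
translates of maximal totally singular subspaces `M`, `N`, with intersection the corresponding
translate of `M ⊓ N`. -/
theorem stmt7 {F V : Type*} [Field F] [Fintype F] [AddCommGroup V] [Module F V] [Finite V]
    (q m : ℕ) (hq : Fintype.card F = q) (hm : 1 ≤ m) (hV : finrank F V = 2 * m)
    (Q : QuadraticForm F V)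
    (hnd : ∀ x : V, (∀ y : V, QuadraticMap.polar Q x y = 0) → x = 0)
    (C D : Set V)
    (hC : (affinePolarGraph Q).IsClique C)
    (hCmax : ∀ E : Set V, (affinePolarGraph Q).IsClique E → C ⊆ E → E = C)
    (hD : (affinePolarGraph Q).IsClique D)
    (hDmax : ∀ E : Set V, (affinePolarGraph Q).IsClique E → D ⊆ E → E = D)
    (hCD : C ≠ D) (hint : (C ∩ D).Nonempty) :
    ∃ M N : Submodule F V,
      (∀ x ∈ M, Q x = 0) ∧ (∀ M' : Submodule F V, (∀ x ∈ M', Q x = 0) → M ≤ M' → M' = M) ∧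
      (∀ x ∈ N, Q x = 0) ∧ (∀ N' : Submodule F V, (∀ x ∈ N', Q x = 0) → N ≤ N' → N' = N) ∧
      ∀ v ∈ C ∩ D, C = (v + ·) '' (M : Set V) ∧ D = (v + ·) '' (N : Set V) ∧
        C ∩ D = (v + ·) '' ((M ⊓ N : Submodule F V) : Set V) := by
  obtain ⟨M, hM, hMmax, hCM⟩ :=
    exists_submodule_of_maximal_clique Q C hC hCmax (hint.mono Set.inter_subset_left)
  obtain ⟨N, hN, hNmax, hDN⟩ :=
    exists_submodule_of_maximal_clique Q D hD hDmax (hint.mono Set.inter_subset_right)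
  refine ⟨M, N, hM, hMmax, hN, hNmax, fun v hv => ⟨hCM v hv.1, hDN v hv.2, ?_⟩⟩
  rw [Submodule.coe_inf, Set.image_inter (add_right_injective v), ← hCM v hv.1, ← hDN v hv.2]
end

section
/- Suppose T0 and T1 are two disjoint cliques of VO(Q), each of size q^m − q^{m−1}, such that no vertex of T0 is adjacent to any vertex of T1. Then there exist a vector v ∈ V and distinct m-dimensional totally singular subspaces M0 and M1 of V with L := M0 ∩ M1 of dimension m−1 such that T0 = v + (M0 \ L) and T1 = v + (M1 \ L). -/
/-!
A clique of `VO(Q)` through `v` spans, after translation by `-v`, a totally singular subspace, which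
extends to an `m`-dimensional one because `Q` is hyperbolic (`exists_maximal_of_totallySingular`,
`clique_subset_coset`). Hence `T₁ ⊆ b + M₁` with `M₁` totally singular of dimension `m`, and
`H := (b + M₁) \ T₁` has `q ^ (m - 1)` elements.

For `x ∈ T₀` the function `y ↦ Q (x - y)` is affine on `b + M₁`. It has no zero on `T₁`, so it is
not constant: otherwise `x - b ∈ M₁^⊥ = M₁` and it would vanish identically. Hence it has at least
`q ^ (m - 1)` zeros, all of them in `H`, and so its zero set is exactly `H`
(`card_le_zeros`). Therefore `T₀ ∪ H` is a clique of size `q ^ m`, that is, a full coset `v + M₀`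
for any `v ∈ H`, while `T₁ ∪ H = b + M₁ = v + M₁`. Since `T₀` and `T₁` are disjoint,
`H = v + (M₀ ⊓ M₁)`, and everything follows.
-/

open Module

section Helpers

variable {F V : Type*} [Field F] [AddCommGroup V] [Module F V]

lemma polar_eq_zero_of_singular {Q : QuadraticForm F V} {W : Submodule F V}
    (hW : ∀ x ∈ W, Q x = 0) {x y : V} (hx : x ∈ W) (hy : y ∈ W) :
    QuadraticMap.polar Q x y = 0 := by
  simp [QuadraticMap.polar, hW _ hx, hW _ hy, hW _ (W.add_mem hx hy)]

lemma polarBilin_nondegenerate {Q : QuadraticForm F V}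
    (hnd : ∀ x : V, (∀ y : V, QuadraticMap.polar Q x y = 0) → x = 0) :
    LinearMap.BilinForm.Nondegenerate (QuadraticMap.polarBilin Q) := by
  constructor
  · intro x hx
    exact hnd x fun y => by simpa using hx y
  · intro x hx
    exact hnd x fun y => by simpa [QuadraticMap.polar_comm] using hx y

lemma mem_orthogonal_polarBilin {Q : QuadraticForm F V} {W : Submodule F V} {x : V} :
    x ∈ LinearMap.BilinForm.orthogonal (QuadraticMap.polarBilin Q) W ↔
      ∀ w ∈ W, QuadraticMap.polar Q w x = 0 := by
  simp [LinearMap.BilinForm.mem_orthogonal_iff]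

/-- A totally singular subspace of half the dimension is its own orthogonal complement. -/
lemma orthogonal_eq_self [FiniteDimensional F V] {m : ℕ} (hV : finrank F V = 2 * m)
    {Q : QuadraticForm F V}
    (hnd : ∀ x : V, (∀ y : V, QuadraticMap.polar Q x y = 0) → x = 0)
    {W : Submodule F V} (hW : ∀ x ∈ W, Q x = 0) (hWm : finrank F W = m) :
    LinearMap.BilinForm.orthogonal (QuadraticMap.polarBilin Q) W = W := by
  symm
  apply Submodule.eq_of_le_of_finrank_eq
  · intro x hx
    exact mem_orthogonal_polarBilin.2 fun w hw => polar_eq_zero_of_singular hW hw hx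
  · rw [LinearMap.BilinForm.finrank_orthogonal (polarBilin_nondegenerate hnd)]
    omega

/-- In a hyperbolic space every totally singular `U` lies in one of dimension `m`: if `W` is
totally singular of dimension `m`, then `U ⊔ (U^⊥ ⊓ W)` works. -/
lemma exists_maximal_of_totallySingular [FiniteDimensional F V] {m : ℕ}
    (hV : finrank F V = 2 * m) {Q : QuadraticForm F V}
    (hnd : ∀ x : V, (∀ y : V, QuadraticMap.polar Q x y = 0) → x = 0)
    (hhyp : ∃ W : Submodule F V, (∀ x ∈ W, Q x = 0) ∧ finrank F W = m)
    (U : Submodule F V) (hU : ∀ x ∈ U, Q x = 0) :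
    ∃ M : Submodule F V, U ≤ M ∧ (∀ x ∈ M, Q x = 0) ∧ finrank F M = m := by
  obtain ⟨W, hW, hWm⟩ := hhyp
  have hWo := orthogonal_eq_self hV hnd hW hWm
  set B := QuadraticMap.polarBilin Q with hB
  set P := LinearMap.BilinForm.orthogonal B U ⊓ W with hP
  refine ⟨U ⊔ P, le_sup_left, ?_, ?_⟩
  · intro x hx
    obtain ⟨u, hu, w, hw, rfl⟩ := Submodule.mem_sup.1 hx
    have h1 : QuadraticMap.polar Q u w = 0 := mem_orthogonal_polarBilin.1 hw.1 u hu
    rw [QuadraticMap.map_add Q, h1, hU u hu, hW w hw.2]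
    simp
  · -- `P = (U ⊔ W)^⊥` because `W = W^⊥`, and `U ⊓ P = U ⊓ W`.
    have hPo : P = LinearMap.BilinForm.orthogonal B (U ⊔ W) := by
      ext x
      constructor
      · rintro ⟨h1, h2⟩
        rw [SetLike.mem_coe, ← hWo] at h2
        refine mem_orthogonal_polarBilin.2 fun z hz => ?_
        obtain ⟨u, hu, w, hw, rfl⟩ := Submodule.mem_sup.1 hz
        rw [QuadraticMap.polar_add_left, mem_orthogonal_polarBilin.1 h1 u hu,
          mem_orthogonal_polarBilin.1 h2 w hw, add_zero]
      · intro h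
        have h' := mem_orthogonal_polarBilin.1 h
        refine ⟨mem_orthogonal_polarBilin.2 fun u hu => h' u (Submodule.mem_sup_left hu), ?_⟩
        rw [SetLike.mem_coe, ← hWo]
        exact mem_orthogonal_polarBilin.2 fun u hu => h' u (Submodule.mem_sup_right hu)
    have hUP : U ⊓ P = U ⊓ W := by
      ext x
      constructor
      · rintro ⟨h1, h2⟩
        exact ⟨h1, h2.2⟩
      · rintro ⟨h1, h2⟩
        exact ⟨h1, mem_orthogonal_polarBilin.2
          fun u hu => polar_eq_zero_of_singular hU hu h1, h2⟩
    have e1 := Submodule.finrank_sup_add_finrank_inf_eq U P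
    have e2 := Submodule.finrank_sup_add_finrank_inf_eq U W
    have e3 : finrank F P = finrank F V - finrank F ↥(U ⊔ W) := by
      rw [hPo]
      exact LinearMap.BilinForm.finrank_orthogonal (polarBilin_nondegenerate hnd) _
    have e4 := Submodule.finrank_le (U ⊔ W)
    rw [hUP] at e1
    omega

lemma clique_subset_coset [FiniteDimensional F V] {m : ℕ}
    (hV : finrank F V = 2 * m) {Q : QuadraticForm F V}
    (hnd : ∀ x : V, (∀ y : V, QuadraticMap.polar Q x y = 0) → x = 0)
    (hhyp : ∃ W : Submodule F V, (∀ x ∈ W, Q x = 0) ∧ finrank F W = m)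
    {S : Set V} (hS : ∀ x ∈ S, ∀ y ∈ S, Q (x - y) = 0) {v : V} (hv : v ∈ S) :
    ∃ M : Submodule F V, (∀ x ∈ S, x - v ∈ M) ∧ (∀ x ∈ M, Q x = 0) ∧ finrank F M = m := by
  set D : Set V := (fun x => x - v) '' S with hD
  have hDp : ∀ a ∈ D, ∀ b ∈ D, QuadraticMap.polar Q a b = 0 := by
    rintro _ ⟨x, hx, rfl⟩ _ ⟨y, hy, rfl⟩
    have h1 : QuadraticMap.polar Q (x - v) (-(y - v)) = 0 := by
      have h : x - v + -(y - v) = x - y := by abel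
      simp only [QuadraticMap.polar, QuadraticMap.map_neg, h, hS x hx y hy, hS x hx v hv,
        hS y hy v hv, sub_zero]
    rwa [QuadraticMap.polar_neg_right, neg_eq_zero] at h1
  have hp : ∀ a ∈ Submodule.span F D, ∀ b ∈ Submodule.span F D,
      QuadraticMap.polar Q a b = 0 := by
    intro a ha b hb
    induction ha, hb using Submodule.span_induction₂ with
    | mem_mem x y hx hy => exact hDp x hx y hy
    | zero_left y hy => simp
    | zero_right x hx => simp
    | add_left x y z hx hy hz h1 h2 => rw [QuadraticMap.polar_add_left, h1, h2, add_zero]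
    | add_right x y z hx hy hz h1 h2 => rw [QuadraticMap.polar_add_right, h1, h2, add_zero]
    | smul_left r x y hx hy h => rw [QuadraticMap.polar_smul_left, h, smul_zero]
    | smul_right r x y hx hy h => rw [QuadraticMap.polar_smul_right, h, smul_zero]
  have hs : ∀ a ∈ Submodule.span F D, Q a = 0 := by
    intro a ha
    induction ha using Submodule.span_induction with
    | mem x hx =>
      obtain ⟨y, hy, rfl⟩ := hx
      exact hS y hy v hv
    | zero => simp
    | add x y hx hy h1 h2 => rw [QuadraticMap.map_add Q, h1, h2, hp x hx y hy]; simp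
    | smul r x hx h => rw [QuadraticMap.map_smul, h, smul_zero]
  obtain ⟨M, hM, hMs, hMm⟩ := exists_maximal_of_totallySingular hV hnd hhyp _ hs
  exact ⟨M, fun x hx => hM (Submodule.subset_span ⟨x, hx, rfl⟩), hMs, hMm⟩

lemma ncard_coset [Fintype F] [Finite V] (v : V) (M : Submodule F V) :
    ((v + ·) '' (M : Set V)).ncard = Fintype.card F ^ finrank F M := by
  rw [Set.ncard_image_of_injective _ (add_right_injective v), ← Nat.card_coe_set_eq]
  have : FiniteDimensional F M := inferInstance
  rw [← Nat.card_eq_fintype_card]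
  exact Module.natCard_eq_pow_finrank (K := F) (V := M)

/-- If `w ↦ Q (c - w)` is not constant on a totally singular `m`-space `M`, its zeros in
`b + M` (with `c = x - b`) contain a coset of the hyperplane `M ⊓ c^⊥`. -/
lemma card_le_zeros [Fintype F] [Finite V] {m : ℕ} (Q : QuadraticForm F V)
    {M : Submodule F V} (hM : ∀ x ∈ M, Q x = 0) (hMm : finrank F M = m) {x b : V}
    (hne : ∃ w ∈ M, QuadraticMap.polar Q (x - b) w ≠ 0) :
    Fintype.card F ^ (m - 1) ≤ {y | y - b ∈ M ∧ Q (x - y) = 0}.ncard := by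
  obtain ⟨w, hw, hpw⟩ := hne
  set c := x - b with hc
  set f : M →ₗ[F] F := (QuadraticMap.polarBilin Q c).comp M.subtype with hf
  have hfa : ∀ z : M, f z = QuadraticMap.polar Q c z := fun z => by simp [hf]
  have hQ : ∀ z ∈ M, Q (c - z) = Q c - QuadraticMap.polar Q c z := by
    intro z hz
    rw [sub_eq_add_neg, QuadraticMap.map_add Q, QuadraticMap.map_neg, hM z hz,
      QuadraticMap.polar_neg_right]
    ring
  have hsurj : f ≠ 0 := by
    intro h
    apply hpw
    rw [← hfa ⟨w, hw⟩, h]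
    rfl
  have hrank := LinearMap.finrank_range_add_finrank_ker f
  have hr1 : finrank F (LinearMap.range f) = 1 := by
    rw [LinearMap.range_eq_top.2 (LinearMap.surjective hsurj)]
    simp
  obtain ⟨w0, hw0⟩ := LinearMap.surjective hsurj (Q c)
  have hker : finrank F ((LinearMap.ker f).map M.subtype) = m - 1 := by
    rw [LinearEquiv.finrank_eq (Submodule.equivMapOfInjective M.subtype M.injective_subtype _).symm]
    omega
  rw [← hker, ← ncard_coset (b + w0)]
  apply Set.ncard_le_ncard _ (Set.toFinite _)
  rintro _ ⟨z, hz, rfl⟩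
  obtain ⟨k, hk, rfl⟩ := hz
  have hk' : f k = 0 := hk
  have hmem : (w0 : V) + k ∈ M := M.add_mem w0.2 k.2
  refine ⟨?_, ?_⟩
  · have : b + (w0 : V) + M.subtype k - b = w0 + k := by simp; abel
    rw [this]
    exact hmem
  · have : x - (b + (w0 : V) + M.subtype k) = c - (w0 + k) := by simp [hc]; abel
    simp only [this]
    rw [hQ _ hmem, QuadraticMap.polar_add_right, ← hfa, ← hfa, hk', hw0]
    ring

end Helpers

/-- hyperbolic case: a pair of disjoint isolated cliques of `VO(Q)` of size
`q^m - q^(m-1)` each arises as `v + (M₀ \ L)`, `v + (M₁ \ L)` for distinct `m`-dimensional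
totally singular subspaces `M₀, M₁` with `L := M₀ ⊓ M₁` of dimension `m-1`. -/
theorem stmt9 {F V : Type*} [Field F] [Fintype F] [AddCommGroup V] [Module F V] [Finite V]
    (q m : ℕ) (hq : Fintype.card F = q) (hm : 1 ≤ m) (hV : finrank F V = 2 * m)
    (Q : QuadraticForm F V)
    (hnd : ∀ x : V, (∀ y : V, QuadraticMap.polar Q x y = 0) → x = 0)
    (hhyp : ∃ W : Submodule F V, (∀ x ∈ W, Q x = 0) ∧ finrank F W = m)
    (T₀ T₁ : Set V) (hdisj : Disjoint T₀ T₁)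
    (hT₀c : (affinePolarGraph Q).IsClique T₀) (hT₁c : (affinePolarGraph Q).IsClique T₁)
    (hT₀card : T₀.ncard = q ^ m - q ^ (m - 1)) (hT₁card : T₁.ncard = q ^ m - q ^ (m - 1))
    (hiso : ∀ x ∈ T₀, ∀ y ∈ T₁, ¬(affinePolarGraph Q).Adj x y) :
    ∃ (v : V) (M₀ M₁ : Submodule F V), M₀ ≠ M₁ ∧
      (∀ x ∈ M₀, Q x = 0) ∧ (∀ x ∈ M₁, Q x = 0) ∧
      finrank F M₀ = m ∧ finrank F M₁ = m ∧ finrank F ↥(M₀ ⊓ M₁) = m - 1 ∧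
      T₀ = (v + ·) '' ((M₀ : Set V) \ ((M₀ ⊓ M₁ : Submodule F V) : Set V)) ∧
      T₁ = (v + ·) '' ((M₁ : Set V) \ ((M₀ ⊓ M₁ : Submodule F V) : Set V)) := by
  classical
  subst hq
  have hfd : FiniteDimensional F V := inferInstance
  have hq1 : 1 < Fintype.card F := Fintype.one_lt_card
  have hlt : Fintype.card F ^ (m - 1) < Fintype.card F ^ m :=
    Nat.pow_lt_pow_right hq1 (by omega)
  have hcl : ∀ T : Set V, (affinePolarGraph Q).IsClique T →
      ∀ x ∈ T, ∀ y ∈ T, Q (x - y) = 0 := by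
    intro T hT x hx y hy
    by_cases hxy : x = y
    · simp [hxy]
    · have h := hT hx hy hxy
      rw [affinePolarGraph, SimpleGraph.fromRel_adj] at h
      rcases h.2 with h | h
      · exact h
      · rw [← QuadraticMap.map_neg, neg_sub]
        exact h
  have hno : ∀ x ∈ T₀, ∀ y ∈ T₁, Q (x - y) ≠ 0 := by
    intro x hx y hy h
    apply hiso x hx y hy
    rw [affinePolarGraph, SimpleGraph.fromRel_adj]
    exact ⟨fun e => Set.disjoint_left.1 hdisj hx (e ▸ hy), Or.inl h⟩
  have hQ0 := hcl T₀ hT₀c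
  have hQ1 := hcl T₁ hT₁c
  obtain ⟨b, hb⟩ : T₁.Nonempty := by
    apply Set.nonempty_of_ncard_ne_zero
    omega
  obtain ⟨a, ha⟩ : T₀.Nonempty := by
    apply Set.nonempty_of_ncard_ne_zero
    omega
  have hcoset : ∀ (v : V) (M : Submodule F V) (x : V),
      x ∈ (v + ·) '' (M : Set V) ↔ x - v ∈ M := by
    intro v M x
    constructor
    · rintro ⟨z, hz, rfl⟩
      simpa using hz
    · intro h
      exact ⟨x - v, h, by simp⟩
  obtain ⟨M₁, hT1M, hM1s, hM1m⟩ := clique_subset_coset hV hnd hhyp hQ1 hb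
  set H : Set V := (b + ·) '' (M₁ : Set V) \ T₁ with hH
  have hHcard : H.ncard = Fintype.card F ^ (m - 1) := by
    rw [hH, Set.ncard_sdiff (fun x hx => (hcoset b M₁ x).2 (hT1M x hx)) (Set.toFinite _),
      ncard_coset, hM1m, hT₁card]
    omega
  -- Every vertex of `T₀` is adjacent to every vertex of `H`.
  have hTH : ∀ x ∈ T₀, ∀ y ∈ H, Q (x - y) = 0 := by
    intro x hx
    have hne : ∃ w ∈ M₁, QuadraticMap.polar Q (x - b) w ≠ 0 := by
      by_contra! hcon
      apply hno x hx b hb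
      apply hM1s
      rw [← orthogonal_eq_self hV hnd hM1s hM1m]
      exact mem_orthogonal_polarBilin.2 fun w hw => by
        rw [QuadraticMap.polar_comm]
        exact hcon w hw
    have hsub : {y | y - b ∈ M₁ ∧ Q (x - y) = 0} ⊆ H := by
      rintro y ⟨hy1, hy2⟩
      exact ⟨(hcoset b M₁ y).2 hy1, fun hy => hno x hx y hy hy2⟩
    have heq := Set.eq_of_subset_of_ncard_le hsub
      (by rw [hHcard]; exact card_le_zeros Q hM1s hM1m hne) (Set.toFinite _)
    intro y hy
    rw [← heq] at hy
    exact hy.2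
  have hdTH : Disjoint T₀ H := by
    rw [Set.disjoint_left]
    rintro x hx ⟨hx1, -⟩
    exact hno x hx b hb (hM1s _ ((hcoset b M₁ x).1 hx1))
  obtain ⟨v, hv⟩ : H.Nonempty := by
    apply Set.nonempty_of_ncard_ne_zero
    rw [hHcard]
    positivity
  have hvM : v - b ∈ M₁ := (hcoset b M₁ v).1 hv.1
  have hM1v : ∀ x, x - v ∈ M₁ ↔ x - b ∈ M₁ := by
    intro x
    have : x - b = (x - v) + (v - b) := by abel
    rw [this, Submodule.add_mem_iff_left _ hvM]
  have hclTH : ∀ x ∈ T₀ ∪ H, ∀ y ∈ T₀ ∪ H, Q (x - y) = 0 := by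
    rintro x (hx | hx) y (hy | hy)
    · exact hQ0 x hx y hy
    · exact hTH x hx y hy
    · rw [← QuadraticMap.map_neg, neg_sub]
      exact hTH y hy x hx
    · apply hM1s
      have : x - y = (x - b) - (y - b) := by abel
      rw [this]
      exact M₁.sub_mem ((hcoset b M₁ x).1 hx.1) ((hcoset b M₁ y).1 hy.1)
  obtain ⟨M₀, hM0, hM0s, hM0m⟩ :=
    clique_subset_coset hV hnd hhyp hclTH (Set.mem_union_right _ hv)
  have hM0eq : T₀ ∪ H = (v + ·) '' (M₀ : Set V) := by
    apply Set.eq_of_subset_of_ncard_le (fun x hx => (hcoset v M₀ x).2 (hM0 x hx)) _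
      (Set.toFinite _)
    rw [ncard_coset, hM0m, Set.ncard_union_eq hdTH (Set.toFinite _) (Set.toFinite _),
      hHcard, hT₀card]
    omega
  have hM0iff : ∀ x, x - v ∈ M₀ ↔ x ∈ T₀ ∨ x ∈ H := by
    intro x
    rw [← hcoset, ← hM0eq, Set.mem_union]
  have hM1iff : ∀ x, x - v ∈ M₁ ↔ x ∈ T₁ ∨ x ∈ H := by
    intro x
    rw [hM1v, hH, Set.mem_sdiff, hcoset]
    have := hT1M x
    tauto
  have hdT1H : ∀ x ∈ T₁, x ∉ H := fun x hx h => h.2 hx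
  have hdT0H : ∀ x ∈ T₀, x ∉ H := fun x hx h => Set.disjoint_left.1 hdTH hx h
  have hd01 : ∀ x ∈ T₀, x ∉ T₁ := fun x hx h => Set.disjoint_left.1 hdisj hx h
  have hLiff : ∀ x, x - v ∈ M₀ ⊓ M₁ ↔ x ∈ H := by
    intro x
    rw [Submodule.mem_inf, hM0iff, hM1iff]
    have := hd01 x
    tauto
  have hLm : finrank F ↥(M₀ ⊓ M₁) = m - 1 := by
    have h1 : (v + ·) '' ((M₀ ⊓ M₁ : Submodule F V) : Set V) = H := by
      ext x
      rw [hcoset, hLiff]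
    have h2 := ncard_coset v (M₀ ⊓ M₁)
    rw [h1, hHcard] at h2
    exact (Nat.pow_right_injective hq1 h2).symm
  have hdiff : ∀ (M L : Submodule F V) (x : V),
      x ∈ (v + ·) '' ((M : Set V) \ (L : Set V)) ↔ x - v ∈ M ∧ x - v ∉ L := by
    intro M L x
    constructor
    · rintro ⟨z, hz, rfl⟩
      simpa using hz
    · intro h
      exact ⟨x - v, h, by simp⟩
  refine ⟨v, M₀, M₁, ?_, hM0s, hM1s, hM0m, hM1m, hLm, ?_, ?_⟩
  · rintro rfl
    rw [inf_idem] at hLm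
    omega
  · ext x
    rw [hdiff, hLiff, hM0iff]
    have := hdT0H x
    tauto
  · ext x
    rw [hdiff, hLiff, hM1iff]
    have := hdT1H x
    tauto
end

section
/- Suppose T0 and T1 are two disjoint cliques of VO(Q), each of size q^{m−1}, such that no vertex of T0 is adjacent to any vertex of T1. Then there exist an (m−1)-dimensional totally singular subspace U of V, a vector v ∈ V, and t ∈ U^⊥ \ U such that T0 = v + U and T1 = t + v + U. -/
/-!
Translating a clique of `VO(Q)` so that it contains `0` gives a set of pairwise orthogonal singular
vectors, whose span is totally singular. In the elliptic case totally singular subspaces have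
dimension at most `m - 1`, so a clique with `q ^ (m - 1)` elements fills its span: it is a coset of
an `(m - 1)`-dimensional totally singular subspace (`clique_eq_coset`).

Write `T₀ = v + U₀`, `T₁ = w + U₁` and `t = w - v`. The absence of edges says that `Q` has no zero
on `t + U₀ + U₁`. On `t + U₀` the form is the affine function `Q t + B(t, ·)`, which would have a
zero if `B(t, ·)` were nonzero on `U₀`; hence `t ⊥ U₀`, and likewise `t ⊥ U₁`. Then
`Q (t + x + y) = Q t + B(x, y)` for `x ∈ U₀`, `y ∈ U₁`, and the same argument gives `U₀ ⊥ U₁`.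
So `U₀ + U₁` is totally singular, and the dimension bound forces `U₀ = U₁`.
-/

open Module

section Helpers

variable {F V : Type*} [Field F] [AddCommGroup V] [Module F V]

theorem span_totally_singular (Q : QuadraticForm F V) (S : Set V)
    (hS : ∀ x ∈ S, Q x = 0) (hB : ∀ x ∈ S, ∀ y ∈ S, QuadraticMap.polar Q x y = 0) :
    ∀ x ∈ Submodule.span F S, Q x = 0 := by
  have h1 : ∀ y ∈ S, ∀ x ∈ Submodule.span F S, QuadraticMap.polar Q x y = 0 := by
    intro y hy x hx
    induction hx using Submodule.span_induction with
    | mem x hx => exact hB x hx y hy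
    | zero => simp
    | add a b _ _ ha hb => rw [QuadraticMap.polar_add_left, ha, hb, add_zero]
    | smul c a _ ha => rw [QuadraticMap.polar_smul_left, ha, smul_zero]
  have h2 : ∀ x ∈ Submodule.span F S, ∀ y ∈ Submodule.span F S,
      QuadraticMap.polar Q x y = 0 := by
    intro x hx y hy
    induction hy using Submodule.span_induction with
    | mem y hy => exact h1 y hy x hx
    | zero => simp
    | add a b _ _ ha hb => rw [QuadraticMap.polar_add_right, ha, hb, add_zero]
    | smul c a _ ha => rw [QuadraticMap.polar_smul_right, ha, smul_zero]
  intro x hx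
  induction hx using Submodule.span_induction with
  | mem x hx => exact hS x hx
  | zero => simp
  | add a b ha' hb' ha hb => rw [QuadraticMap.map_add Q, ha, hb, h2 a ha' b hb']; simp
  | smul c a _ ha => rw [QuadraticMap.map_smul, ha, smul_zero]

/-- A totally singular subspace of dimension at least `m` would contain one of dimension exactly
`m`, so excluding the latter bounds all dimensions. -/
theorem finrank_lt_of_totally_singular (m : ℕ) (Q : QuadraticForm F V)
    (hell₂ : ∀ W : Submodule F V, (∀ x ∈ W, Q x = 0) → finrank F W ≠ m)
    (U : Submodule F V) (hU : ∀ x ∈ U, Q x = 0) : finrank F U < m := by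
  by_contra! h
  obtain ⟨f, hf⟩ := exists_linearIndependent_of_le_finrank h
  have hf' : LinearIndependent F (U.subtype ∘ f) := hf.map' U.subtype U.ker_subtype
  refine hell₂ (Submodule.span F (Set.range (U.subtype ∘ f))) (fun x hx => hU x ?_) ?_
  · refine Submodule.span_le.2 ?_ hx
    rintro _ ⟨i, rfl⟩
    exact (f i).2
  · rw [finrank_span_eq_card hf', Fintype.card_fin]

theorem clique_singular_sub (Q : QuadraticForm F V) {T : Set V}
    (hT : (affinePolarGraph Q).IsClique T) {x y : V} (hx : x ∈ T) (hy : y ∈ T) :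
    Q (x - y) = 0 := by
  by_cases h : x = y
  · simp [h]
  · obtain ⟨-, h | h⟩ := hT hx hy h
    · exact h
    · rw [← neg_sub, QuadraticMap.map_neg]; exact h

theorem clique_eq_coset [Fintype F] [Finite V] (m : ℕ) (hm : 1 ≤ m) (Q : QuadraticForm F V)
    (hell₂ : ∀ W : Submodule F V, (∀ x ∈ W, Q x = 0) → finrank F W ≠ m)
    (T : Set V) (hT : (affinePolarGraph Q).IsClique T)
    (hcard : T.ncard = Fintype.card F ^ (m - 1)) :
    ∃ (U : Submodule F V) (v : V), (∀ x ∈ U, Q x = 0) ∧ finrank F U = m - 1 ∧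
      T = (v + ·) '' (U : Set V) := by
  have hne : T.Nonempty := by
    apply Set.nonempty_of_ncard_ne_zero
    rw [hcard]
    exact pow_ne_zero _ Fintype.card_ne_zero
  obtain ⟨v, hv⟩ := hne
  set S : Set V := (fun x => x - v) '' T with hSdef
  have hScard : S.ncard = Fintype.card F ^ (m - 1) := by
    rw [← hcard, hSdef]
    exact Set.ncard_image_of_injective _ (sub_left_injective)
  have hU : ∀ x ∈ Submodule.span F S, Q x = 0 := by
    apply span_totally_singular
    · rintro _ ⟨x, hx, rfl⟩
      exact clique_singular_sub Q hT hx hv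
    · rintro _ ⟨x, hx, rfl⟩ _ ⟨y, hy, rfl⟩
      -- `B(a, b) = -B(a, -b) = -(Q (a - b) - Q a - Q b)` with `a - b = x - y`
      have h1 : QuadraticMap.polar Q (x - v) (-(y - v)) = 0 := by
        rw [QuadraticMap.polar, QuadraticMap.map_neg, clique_singular_sub Q hT hx hv,
          clique_singular_sub Q hT hy hv,
          show x - v + -(y - v) = x - y by abel, clique_singular_sub Q hT hx hy]
        simp
      rwa [QuadraticMap.polar_neg_right, neg_eq_zero] at h1
  have hlt := finrank_lt_of_totally_singular m Q hell₂ _ hU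
  have hUcard : (Submodule.span F S : Set V).ncard
      = Fintype.card F ^ finrank F (Submodule.span F S) := by
    rw [← Nat.card_coe_set_eq, ← Nat.card_eq_fintype_card]
    exact Module.natCard_eq_pow_finrank
  have hle : S.ncard ≤ (Submodule.span F S : Set V).ncard :=
    Set.ncard_le_ncard Submodule.subset_span (Set.toFinite _)
  have hdim : finrank F (Submodule.span F S) = m - 1 := by
    rw [hScard, hUcard, Nat.pow_le_pow_iff_right Fintype.one_lt_card] at hle
    omega
  have hS : S = (Submodule.span F S : Set V) :=
    Set.eq_of_subset_of_ncard_le Submodule.subset_span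
      (by rw [hScard, hUcard, hdim]) (Set.toFinite _)
  refine ⟨Submodule.span F S, v, hU, hdim, ?_⟩
  rw [← hS, hSdef, Set.image_image]
  simp

/-- If `c + B(a, x)` has no zero for `x` in a subspace, then `B(a, ·)` vanishes there. -/
theorem polar_eq_zero_of_forall_ne (Q : QuadraticForm F V) (U : Submodule F V) (a : V) (c : F)
    (h : ∀ x ∈ U, c + QuadraticMap.polar Q a x ≠ 0) :
    ∀ x ∈ U, QuadraticMap.polar Q a x = 0 := by
  intro x hx
  by_contra hne
  apply h ((-c / QuadraticMap.polar Q a x) • x) (U.smul_mem _ hx)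
  rw [QuadraticMap.polar_smul_right, smul_eq_mul, div_mul_cancel₀ _ hne, add_neg_cancel]

end Helpers

/-- elliptic case: a pair of disjoint isolated cliques of size `q^(m-1)` in
`VO(Q)` arises as `v + U`, `t + v + U` for an `(m-1)`-dimensional totally singular `U` and
`t ∈ U^⊥ \ U`. -/
theorem stmt15 {F V : Type*} [Field F] [Fintype F] [AddCommGroup V] [Module F V] [Finite V]
    (q m : ℕ) (hq : Fintype.card F = q) (hm : 1 ≤ m) (hV : finrank F V = 2 * m)
    (Q : QuadraticForm F V)
    (hnd : ∀ x : V, (∀ y : V, QuadraticMap.polar Q x y = 0) → x = 0)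
    (hm2 : 2 ≤ m)
    (hell₁ : ∃ W : Submodule F V, (∀ x ∈ W, Q x = 0) ∧ finrank F W = m - 1)
    (hell₂ : ∀ W : Submodule F V, (∀ x ∈ W, Q x = 0) → finrank F W ≠ m)
    (T₀ T₁ : Set V) (hdisj : Disjoint T₀ T₁)
    (hT₀c : (affinePolarGraph Q).IsClique T₀) (hT₁c : (affinePolarGraph Q).IsClique T₁)
    (hT₀card : T₀.ncard = q ^ (m - 1)) (hT₁card : T₁.ncard = q ^ (m - 1))
    (hiso : ∀ x ∈ T₀, ∀ y ∈ T₁, ¬(affinePolarGraph Q).Adj x y) :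
    ∃ (U : Submodule F V) (v t : V),
      (∀ x ∈ U, Q x = 0) ∧ finrank F U = m - 1 ∧
      (∀ u ∈ U, QuadraticMap.polar Q t u = 0) ∧ t ∉ U ∧
      T₀ = (v + ·) '' (U : Set V) ∧ T₁ = (t + v + ·) '' (U : Set V) := by
  subst hq
  obtain ⟨U₀, v, hU₀, hd₀, hT₀⟩ := clique_eq_coset m hm Q hell₂ T₀ hT₀c hT₀card
  obtain ⟨U₁, w, hU₁, hd₁, hT₁⟩ := clique_eq_coset m hm Q hell₂ T₁ hT₁c hT₁card
  have key : ∀ x ∈ U₀, ∀ y ∈ U₁, Q (w - v + x + y) ≠ 0 := by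
    intro x hx y hy h0
    have hx' : v + -x ∈ T₀ := by rw [hT₀]; exact ⟨-x, U₀.neg_mem hx, rfl⟩
    have hy' : w + y ∈ T₁ := by rw [hT₁]; exact ⟨y, hy, rfl⟩
    refine hiso _ hx' _ hy' ⟨hdisj.ne_of_mem hx' hy', Or.inr ?_⟩
    rw [← h0]
    congr 1
    abel
  have ht₀ : ∀ x ∈ U₀, QuadraticMap.polar Q (w - v) x = 0 := by
    apply polar_eq_zero_of_forall_ne Q U₀ _ (Q (w - v))
    intro x hx h
    apply key x hx 0 U₁.zero_mem
    rw [add_zero, QuadraticMap.map_add Q, hU₀ x hx, add_zero, h]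
  have ht₁ : ∀ y ∈ U₁, QuadraticMap.polar Q (w - v) y = 0 := by
    apply polar_eq_zero_of_forall_ne Q U₁ _ (Q (w - v))
    intro y hy h
    apply key 0 U₀.zero_mem y hy
    rw [add_zero, QuadraticMap.map_add Q, hU₁ y hy, add_zero, h]
  have h01 : ∀ x ∈ U₀, ∀ y ∈ U₁, QuadraticMap.polar Q x y = 0 := by
    intro x hx
    apply polar_eq_zero_of_forall_ne Q U₁ _ (Q (w - v))
    intro y hy h
    apply key x hx y hy
    rw [QuadraticMap.map_add Q, QuadraticMap.map_add Q (w - v) x, QuadraticMap.polar_add_left,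
      hU₀ x hx, hU₁ y hy, ht₀ x hx, ht₁ y hy]
    simpa using h
  have hsup : ∀ z ∈ U₀ ⊔ U₁, Q z = 0 := by
    intro z hz
    obtain ⟨x, hx, y, hy, rfl⟩ := Submodule.mem_sup.1 hz
    rw [QuadraticMap.map_add Q, hU₀ x hx, hU₁ y hy, h01 x hx y hy]
    simp
  have hlt := finrank_lt_of_totally_singular m Q hell₂ _ hsup
  have e₀ : U₀ = U₀ ⊔ U₁ := Submodule.eq_of_le_of_finrank_le le_sup_left (by omega)
  have e₁ : U₁ = U₀ ⊔ U₁ := Submodule.eq_of_le_of_finrank_le le_sup_right (by omega)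
  have e : U₁ = U₀ := e₁.trans e₀.symm
  refine ⟨U₀, v, w - v, hU₀, hd₀, ht₀, ?_, hT₀, ?_⟩
  · intro hmem
    apply key 0 U₀.zero_mem 0 U₁.zero_mem
    simpa using hU₀ _ hmem
  · rw [hT₁, e, sub_add_cancel]
end
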